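/- Assume all three of: (B1) ψ*(0)^{1/2} < ψ^{1/2}·‖Π_{W⊥}(G)‖_P; (B2) either ∂₁F_κ(ζ,0) > 0 or ∂₂F_κ(ζ,0) < ‖∂₁F_κ(ζ,0)·(1 − ζ²X^{−1})·W + ψ^{1/2}·Π_{W⊥}(G)‖_P; (B3) either ∂₁F_κ(−ζ,0) < 0 or ∂₂F_κ(−ζ,0) < ‖∂₁F_κ(−ζ,0)·(1 − ζ²X^{−1})·W + ψ^{1/2}·Π_{W⊥}(G)‖_P. Then the system of three equations −c₁ = E_P[(ψ^{1/2}Π_{W⊥}(G) + A·W)·W·X^{1/2}/D], c₁² + c₂² = E_P[(ψ^{1/2}Π_{W⊥}(G) + A·W)²·X/D²], and 1 = E_P[(ψ^{1/2}Π_{W⊥}(G) + A·W)²/D²] — where A = ∂₁F_κ(c₁,c₂) − c₁c₂^{−1}∂₂F_κ(c₁,c₂) and D = c₂^{−1}∂₂F_κ(c₁,c₂)·X^{1/2} + ψ^{1/2}·s·X^{−1/2} — admits a unique solution (c₁,c₂,s) ∈ ℝ × (0,∞) × (0,∞). -/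

import Mathlib

open MeasureTheory ProbabilityTheory Real Filter Set Topology

noncomputable section

namespace MaxMargin

/-- The standard Gaussian measure on `ℝ`. -/
def stdG : Measure ℝ := gaussianReal 0 1

/-- The function `F_κ(c₁,c₂) = (E[((κ − c₁·Y·G − c₂·Z)₊)²])^{1/2}` where `G, Z` are independent
standard Gaussians and, conditionally on `G`, `Y ∈ {+1,−1}` with `P(Y = +1 | G) = f(G)`. -/
def Fk (f : ℝ → ℝ) (κ c₁ c₂ : ℝ) : ℝ :=
  Real.sqrt (∫ g, ∫ z,
    (f g * (max (κ - c₁ * g - c₂ * z) 0) ^ 2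
      + (1 - f g) * (max (κ + c₁ * g - c₂ * z) 0) ^ 2) ∂stdG ∂stdG)

/-- Non-degeneracy of `f`: the variable `T = Y·G` satisfies `P(T < x) > 0` and `P(T > x) > 0`
for every `x ∈ ℝ`. -/
def NonDeg (f : ℝ → ℝ) : Prop :=
  ∀ x : ℝ,
    (0 < ∫ g, (f g * (if g < x then (1:ℝ) else 0)
          + (1 - f g) * (if -g < x then (1:ℝ) else 0)) ∂stdG) ∧
    (0 < ∫ g, (f g * (if x < g then (1:ℝ) else 0)
          + (1 - f g) * (if x < -g then (1:ℝ) else 0)) ∂stdG)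


/-- Points of `ℝ³` carrying the coordinates `(G, X, W)`. -/
abbrev Pt : Type := ℝ × ℝ × ℝ

/-- First coordinate `G`. -/
def Gc : Pt → ℝ := fun q => q.1

/-- Second coordinate `X`. -/
def Xc : Pt → ℝ := fun q => q.2.1

/-- Third coordinate `W`. -/
def Wc : Pt → ℝ := fun q => q.2.2

/-- The inner product `⟨h₁,h₂⟩_P = E_P[h₁h₂]`. -/
def ip (P : Measure Pt) (h₁ h₂ : Pt → ℝ) : ℝ := ∫ q, h₁ q * h₂ q ∂P

/-- The norm `‖h‖_P = ⟨h,h⟩_P^{1/2}`. -/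
def pnorm (P : Measure Pt) (h : Pt → ℝ) : ℝ := Real.sqrt (ip P h h)

/-- Projection onto the orthogonal complement of `W`: `Π_{W⊥}(h) = h − ⟨h,W⟩_P·W`. -/
def projW (P : Measure Pt) (h : Pt → ℝ) : Pt → ℝ := fun q => h q - ip P h Wc * Wc q

/-- Partial derivative of `F_κ` in its first argument. -/
def d1F (f : ℝ → ℝ) (κ c₁ c₂ : ℝ) : ℝ := deriv (fun t => Fk f κ t c₂) c₁

/-- Partial derivative of `F_κ` in its second argument. -/
def d2F (f : ℝ → ℝ) (κ c₁ c₂ : ℝ) : ℝ := deriv (fun t => Fk f κ c₁ t) c₂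

/-- `ψ*(0) = min_{c ∈ ℝ} F₀(c,1)²`. -/
def psiStar0 (f : ℝ → ℝ) : ℝ := ⨅ c : ℝ, (Fk f 0 c 1) ^ 2

/-- The functional `𝓡_{ψ,κ,P}(h) = ψ^{−1/2}·F_κ(⟨h, X^{1/2}W⟩_P, ‖Π_{W⊥}(X^{1/2}h)‖_P)
+ ⟨h, X^{1/2}·Π_{W⊥}(G)⟩_P`. -/
def Rfun (f : ℝ → ℝ) (P : Measure Pt) (ψ κ : ℝ) (h : Pt → ℝ) : ℝ :=
  (Real.sqrt ψ)⁻¹ *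
      Fk f κ (ip P h (fun q => Real.sqrt (Xc q) * Wc q))
        (pnorm P (projW P (fun q => Real.sqrt (Xc q) * h q)))
    + ip P h (fun q => Real.sqrt (Xc q) * projW P Gc q)

/-- `ζ(P) = ‖X^{−1/2}W‖_P^{−1}`. -/
def zetaP (P : Measure Pt) : ℝ := (pnorm P (fun q => (Real.sqrt (Xc q))⁻¹ * Wc q))⁻¹

/-- The system of equations (for the measure `P` on `ℝ³`, with `Π_{W⊥}(G)`):
with `A = ∂₁F_κ(c₁,c₂) − c₁c₂⁻¹∂₂F_κ(c₁,c₂)` and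
`D = c₂⁻¹∂₂F_κ(c₁,c₂)·X^{1/2} + ψ^{1/2}·s·X^{−1/2}`,
`−c₁ = E_P[(ψ^{1/2}Π_{W⊥}(G) + A·W)·W·X^{1/2}/D]`,
`c₁² + c₂² = E_P[(ψ^{1/2}Π_{W⊥}(G) + A·W)²·X/D²]`,
`1 = E_P[(ψ^{1/2}Π_{W⊥}(G) + A·W)²/D²]`. -/
def SolSys (f : ℝ → ℝ) (P : Measure Pt) (ψ κ c₁ c₂ s : ℝ) : Prop :=
  (-c₁ = ∫ q, (Real.sqrt ψ * projW P Gc q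
        + (d1F f κ c₁ c₂ - c₁ * c₂⁻¹ * d2F f κ c₁ c₂) * Wc q) * Wc q * Real.sqrt (Xc q)
      / (c₂⁻¹ * d2F f κ c₁ c₂ * Real.sqrt (Xc q)
          + Real.sqrt ψ * s * (Real.sqrt (Xc q))⁻¹) ∂P)
  ∧ (c₁ ^ 2 + c₂ ^ 2 = ∫ q, (Real.sqrt ψ * projW P Gc q
        + (d1F f κ c₁ c₂ - c₁ * c₂⁻¹ * d2F f κ c₁ c₂) * Wc q) ^ 2 * Xc q
      / (c₂⁻¹ * d2F f κ c₁ c₂ * Real.sqrt (Xc q)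
          + Real.sqrt ψ * s * (Real.sqrt (Xc q))⁻¹) ^ 2 ∂P)
  ∧ (1 = ∫ q, (Real.sqrt ψ * projW P Gc q
        + (d1F f κ c₁ c₂ - c₁ * c₂⁻¹ * d2F f κ c₁ c₂) * Wc q) ^ 2
      / (c₂⁻¹ * d2F f κ c₁ c₂ * Real.sqrt (Xc q)
          + Real.sqrt ψ * s * (Real.sqrt (Xc q))⁻¹) ^ 2 ∂P)

/-- Condition (B1). -/
def CondB1 (f : ℝ → ℝ) (P : Measure Pt) (ψ : ℝ) : Prop :=
  Real.sqrt (psiStar0 f) < Real.sqrt ψ * pnorm P (projW P Gc)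

/-- Condition (B2). -/
def CondB2 (f : ℝ → ℝ) (P : Measure Pt) (ψ κ : ℝ) : Prop :=
  0 < d1F f κ (zetaP P) 0 ∨
    d2F f κ (zetaP P) 0 <
      pnorm P (fun q => d1F f κ (zetaP P) 0 * (1 - (zetaP P) ^ 2 * (Xc q)⁻¹) * Wc q
        + Real.sqrt ψ * projW P Gc q)

/-- Condition (B3). -/
def CondB3 (f : ℝ → ℝ) (P : Measure Pt) (ψ κ : ℝ) : Prop :=
  d1F f κ (-(zetaP P)) 0 < 0 ∨
    d2F f κ (-(zetaP P)) 0 <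
      pnorm P (fun q => d1F f κ (-(zetaP P)) 0 * (1 - (zetaP P) ^ 2 * (Xc q)⁻¹) * Wc q
        + Real.sqrt ψ * projW P Gc q)


/-! ### Cauchy–Schwarz -/

lemma cs_int {Ω : Type*} [MeasurableSpace Ω] (M : Measure Ω) (u v : Ω → ℝ)
    (hu : MemLp u 2 M) (hv : MemLp v 2 M) :
    ∫ x, u x * v x ∂M ≤ Real.sqrt (∫ x, u x ^ 2 ∂M) * Real.sqrt (∫ x, v x ^ 2 ∂M) := by
  have h1 : inner ℝ (hv.toLp v) (hu.toLp u) = ∫ x, u x * v x ∂M := by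
    rw [L2.inner_def]
    apply integral_congr_ae
    filter_upwards [hu.coeFn_toLp, hv.coeFn_toLp] with x hx hy
    simp [hx, hy]
  have h2 : ∀ (w : Ω → ℝ) (hw : MemLp w 2 M), ‖hw.toLp w‖ = Real.sqrt (∫ x, w x ^ 2 ∂M) := by
    intro w hw
    rw [norm_eq_sqrt_real_inner, L2.inner_def]
    congr 1
    apply integral_congr_ae
    filter_upwards [hw.coeFn_toLp] with x hx
    simp [hx, sq]
  rw [← h1, ← h2 u hu, ← h2 v hv, mul_comm]
  exact real_inner_le_norm _ _

/-! ### The abstract function `F` on a measure space -/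

section absF

variable {Ω : Type*} [MeasurableSpace Ω]

/-- positive part of margin -/
def phi (T Z : Ω → ℝ) (κ c₁ c₂ : ℝ) (x : Ω) : ℝ := max (κ - c₁ * T x - c₂ * Z x) 0

/-- abstract version of `Fk` -/
def FF (M : Measure Ω) (T Z : Ω → ℝ) (κ c₁ c₂ : ℝ) : ℝ :=
  Real.sqrt (∫ x, phi T Z κ c₁ c₂ x ^ 2 ∂M)

lemma phi_memLp (M : Measure Ω) [IsFiniteMeasure M] (T Z : Ω → ℝ)
    (hT : MemLp T 2 M) (hZ : MemLp Z 2 M) (κ c₁ c₂ : ℝ) : MemLp (phi T Z κ c₁ c₂) 2 M := by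
  have h : MemLp (fun x => κ - c₁ * T x - c₂ * Z x) 2 M :=
    ((memLp_const κ).sub (hT.const_mul c₁)).sub (hZ.const_mul c₂)
  exact h.pos_part

lemma FF_sq (M : Measure Ω) (T Z : Ω → ℝ) (κ c₁ c₂ : ℝ) :
    FF M T Z κ c₁ c₂ ^ 2 = ∫ x, phi T Z κ c₁ c₂ x ^ 2 ∂M :=
  Real.sq_sqrt (integral_nonneg fun _ => sq_nonneg _)

lemma FF_bounds (M : Measure Ω) [IsFiniteMeasure M] (T Z : Ω → ℝ)
    (hT : MemLp T 2 M) (hZ : MemLp Z 2 M) (κ c₁ c₂ : ℝ) (hpos : 0 < FF M T Z κ c₁ c₂) :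
    ∃ a b C : ℝ, 0 ≤ C ∧ ∀ c₁' c₂',
      FF M T Z κ c₁ c₂ + a * (c₁' - c₁) + b * (c₂' - c₂) ≤ FF M T Z κ c₁' c₂' ∧
      FF M T Z κ c₁' c₂' ≤ FF M T Z κ c₁ c₂ + a * (c₁' - c₁) + b * (c₂' - c₂)
        + C * ((c₁' - c₁) ^ 2 + (c₂' - c₂) ^ 2) := by
  set F := FF M T Z κ c₁ c₂ with hF
  set φ := phi T Z κ c₁ c₂ with hφ
  have hφm : MemLp φ 2 M := phi_memLp M T Z hT hZ κ c₁ c₂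
  have iφ2 := hφm.integrable_sq
  have iφT : Integrable (fun x => φ x * T x) M := hφm.integrable_mul hT
  have iφZ : Integrable (fun x => φ x * Z x) M := hφm.integrable_mul hZ
  have iT2 := hT.integrable_sq
  have iZ2 := hZ.integrable_sq
  set I := ∫ x, φ x * T x ∂M with hI
  set J := ∫ x, φ x * Z x ∂M with hJ
  set t2 := ∫ x, T x ^ 2 ∂M with ht2
  set z2 := ∫ x, Z x ^ 2 ∂M with hz2
  have ht2n : 0 ≤ t2 := integral_nonneg fun _ => sq_nonneg _
  have hz2n : 0 ≤ z2 := integral_nonneg fun _ => sq_nonneg _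
  have hFsq : F ^ 2 = ∫ x, φ x ^ 2 ∂M := FF_sq M T Z κ c₁ c₂
  refine ⟨-(I / F), -(J / F), (t2 + z2) / F, by positivity, ?_⟩
  intro c₁' c₂'
  set F' := FF M T Z κ c₁' c₂' with hF'
  set φ' := phi T Z κ c₁' c₂' with hφ'
  have hφm' : MemLp φ' 2 M := phi_memLp M T Z hT hZ κ c₁' c₂'
  have iφ2' := hφm'.integrable_sq
  have hFsq' : F' ^ 2 = ∫ x, φ' x ^ 2 ∂M := FF_sq M T Z κ c₁' c₂'
  have hF0' : 0 ≤ F' := Real.sqrt_nonneg _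
  set d₁ := c₁' - c₁
  set d₂ := c₂' - c₂
  constructor
  · have h1 : ∫ x, φ x * φ' x ∂M ≤ F * F' := cs_int M φ φ' hφm hφm'
    have h2 : ∫ x, (φ x ^ 2 - d₁ * (φ x * T x) - d₂ * (φ x * Z x)) ∂M ≤ ∫ x, φ x * φ' x ∂M := by
      apply integral_mono
      · exact (iφ2.sub (iφT.const_mul d₁)).sub (iφZ.const_mul d₂)
      · exact hφm.integrable_mul hφm'
      · intro x
        have a1 : 0 ≤ φ x := le_max_right _ _
        have a2 : κ - c₁' * T x - c₂' * Z x ≤ φ' x := le_max_left _ _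
        have a3 : φ x ^ 2 = φ x * (κ - c₁ * T x - c₂ * Z x) := by
          rcases le_total (κ - c₁ * T x - c₂ * Z x) 0 with h | h
          · have : φ x = 0 := max_eq_right h
            rw [this]; ring
          · have : φ x = _ := max_eq_left h
            rw [this]; ring
        have := mul_le_mul_of_nonneg_left a2 a1
        simp only [d₁, d₂]
        nlinarith
    have h3 : ∫ x, (φ x ^ 2 - d₁ * (φ x * T x) - d₂ * (φ x * Z x)) ∂M
        = F ^ 2 - d₁ * I - d₂ * J := by
      have e1 : Integrable (fun x => φ x ^ 2 - d₁ * (φ x * T x)) M := iφ2.sub (iφT.const_mul d₁)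
      rw [integral_sub e1 (iφZ.const_mul d₂),
        integral_sub iφ2 (iφT.const_mul d₁), integral_const_mul, integral_const_mul, hFsq]
    have h4 : F ^ 2 - d₁ * I - d₂ * J ≤ F * F' := by linarith
    have h5 : F + -(I / F) * d₁ + -(J / F) * d₂ = (F ^ 2 - d₁ * I - d₂ * J) / F := by
      field_simp
      ring
    rw [h5, div_le_iff₀ hpos]; linarith
  · have h2 : ∫ x, φ' x ^ 2 ∂M ≤ ∫ x, (φ x ^ 2 - (2 * d₁) * (φ x * T x) - (2 * d₂) * (φ x * Z x)
        + (2 * d₁ ^ 2) * T x ^ 2 + (2 * d₂ ^ 2) * Z x ^ 2) ∂M := by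
      apply integral_mono iφ2'
      · exact (((iφ2.sub (iφT.const_mul _)).sub (iφZ.const_mul _)).add (iT2.const_mul _)).add
          (iZ2.const_mul _)
      · intro x
        have a1 : 0 ≤ φ x := le_max_right _ _
        have a0 : κ - c₁ * T x - c₂ * Z x ≤ φ x := le_max_left _ _
        have key : φ' x ^ 2 ≤ (φ x - d₁ * T x - d₂ * Z x) ^ 2 := by
          rcases le_total (κ - c₁' * T x - c₂' * Z x) 0 with h | h
          · have : φ' x = 0 := max_eq_right h
            rw [this]; simp; positivity
          · have : φ' x = _ := max_eq_left h
            rw [this]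
            apply pow_le_pow_left₀ h
            simp only [d₁, d₂]
            linarith
        simp only
        nlinarith [sq_nonneg (d₁ * T x - d₂ * Z x)]
    have h3 : ∫ x, (φ x ^ 2 - (2 * d₁) * (φ x * T x) - (2 * d₂) * (φ x * Z x)
        + (2 * d₁ ^ 2) * T x ^ 2 + (2 * d₂ ^ 2) * Z x ^ 2) ∂M
        = F ^ 2 - 2 * d₁ * I - 2 * d₂ * J + 2 * d₁ ^ 2 * t2 + 2 * d₂ ^ 2 * z2 := by
      have e1 : Integrable (fun x => φ x ^ 2 - (2 * d₁) * (φ x * T x)) M :=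
        iφ2.sub (iφT.const_mul (2 * d₁))
      have e2 : Integrable (fun x => φ x ^ 2 - (2 * d₁) * (φ x * T x)
          - (2 * d₂) * (φ x * Z x)) M := e1.sub (iφZ.const_mul (2 * d₂))
      have e3 : Integrable (fun x => φ x ^ 2 - (2 * d₁) * (φ x * T x)
          - (2 * d₂) * (φ x * Z x) + (2 * d₁ ^ 2) * T x ^ 2) M :=
        e2.add (iT2.const_mul (2 * d₁ ^ 2))
      rw [integral_add e3 (iZ2.const_mul _), integral_add e2 (iT2.const_mul _),
        integral_sub e1 (iφZ.const_mul _),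
        integral_sub iφ2 (iφT.const_mul _)]
      simp only [integral_const_mul]
      rw [hFsq]
    have h4 : F' ^ 2 ≤ F ^ 2 - 2 * d₁ * I - 2 * d₂ * J + 2 * d₁ ^ 2 * t2 + 2 * d₂ ^ 2 * z2 := by
      rw [hFsq']; linarith
    have h5 : F + -(I / F) * d₁ + -(J / F) * d₂ + (t2 + z2) / F * (d₁ ^ 2 + d₂ ^ 2)
        = (F ^ 2 - d₁ * I - d₂ * J + (t2 + z2) * (d₁ ^ 2 + d₂ ^ 2)) / F := by
      field_simp
      ring
    rw [h5, le_div_iff₀ hpos]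
    nlinarith [sq_nonneg (F' - F), mul_nonneg ht2n (sq_nonneg d₂), mul_nonneg hz2n (sq_nonneg d₁)]

lemma FF_growth (M : Measure Ω) [IsProbabilityMeasure M] (T Z : Ω → ℝ)
    (hT : MemLp T 2 M) (hZ : MemLp Z 2 M) (κ c t : ℝ) (hκ : 0 ≤ κ) (ht : 0 ≤ t) :
    FF M T Z κ (t * c) t ≤ κ + t * FF M T Z 0 c 1 := by
  set φ := phi T Z 0 c 1 with hφ
  have hφm : MemLp φ 2 M := phi_memLp M T Z hT hZ 0 c 1
  set B := FF M T Z 0 c 1 with hB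
  have hB0 : 0 ≤ B := Real.sqrt_nonneg _
  have hBsq : B ^ 2 = ∫ x, φ x ^ 2 ∂M := FF_sq M T Z 0 c 1
  have h1 : ∫ x, φ x ∂M ≤ B := by
    have := cs_int M φ (fun _ => 1) hφm (memLp_const 1)
    have h2 : ∫ x, φ x ∂M ≤ Real.sqrt (∫ x, φ x ^ 2 ∂M) := by simpa using this
    exact h2
  apply Real.sqrt_le_iff.mpr
  refine ⟨by positivity, ?_⟩
  have i1 := hφm.integrable_sq
  have i2 : Integrable φ M := hφm.integrable one_le_two
  calc ∫ x, phi T Z κ (t * c) t x ^ 2 ∂M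
      ≤ ∫ x, (κ ^ 2 + (2 * κ * t) * φ x + t ^ 2 * φ x ^ 2) ∂M := by
        apply integral_mono (phi_memLp M T Z hT hZ _ _ _).integrable_sq
        · exact ((integrable_const _).add (i2.const_mul _)).add (i1.const_mul _)
        · intro x
          have a1 : 0 ≤ φ x := le_max_right _ _
          have a0 : 0 - c * T x - 1 * Z x ≤ φ x := le_max_left _ _
          have a2 : phi T Z κ (t * c) t x ≤ κ + t * φ x := by
            apply max_le _ (by positivity)
            nlinarith
          have a3 : 0 ≤ phi T Z κ (t * c) t x := le_max_right _ _
          simp only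
          nlinarith
    _ = κ ^ 2 + (2 * κ * t) * ∫ x, φ x ∂M + t ^ 2 * B ^ 2 := by
        have e1 : Integrable (fun x => κ ^ 2 + (2 * κ * t) * φ x) M :=
          (integrable_const _).add (i2.const_mul _)
        rw [integral_add e1 (i1.const_mul _),
          integral_add (integrable_const _) (i2.const_mul _)]
        simp only [integral_const_mul]
        rw [hBsq]; simp
    _ ≤ (κ + t * B) ^ 2 := by
        nlinarith [mul_le_mul_of_nonneg_left h1 (mul_nonneg hκ ht)]

end absF

/-! ### The concrete measure -/

section concF

lemma openPos_stdG : Measure.IsOpenPosMeasure stdG :=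
  (gaussianReal_absolutelyContinuous' 0 (one_ne_zero)).isOpenPosMeasure

instance : IsProbabilityMeasure stdG := by unfold stdG; infer_instance

/-- joint law of two independent standard Gaussians -/
def gg : Measure (ℝ × ℝ) := stdG.prod stdG

instance : IsProbabilityMeasure gg := by unfold gg; infer_instance

/-- flip of the first coordinate -/
def flip1 (p : ℝ × ℝ) : ℝ × ℝ := (-p.1, p.2)

lemma meas_flip1 : Measurable flip1 := by unfold flip1; fun_prop

/-- joint law of `(T, Z)` -/
def MM (f : ℝ → ℝ) : Measure (ℝ × ℝ) :=
  gg.withDensity (fun p => ENNReal.ofReal (f p.1))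
    + (gg.withDensity (fun p => ENNReal.ofReal (1 - f p.1))).map flip1

lemma memLp_fst : MemLp (fun p : ℝ × ℝ => p.1) 2 gg := by
  have h : MemLp (id : ℝ → ℝ) 2 stdG := memLp_id_gaussianReal' 2 (by simp)
  exact h.comp_fst stdG

lemma memLp_snd : MemLp (fun p : ℝ × ℝ => p.2) 2 gg := by
  have h : MemLp (id : ℝ → ℝ) 2 stdG := memLp_id_gaussianReal' 2 (by simp)
  exact h.comp_snd stdG

lemma integral_weight (w : ℝ → ℝ) (hw : Continuous w) (hw01 : ∀ x, 0 ≤ w x ∧ w x ≤ 1)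
    (u : ℝ × ℝ → ℝ) (hu : Integrable u gg) :
    Integrable (fun p : ℝ × ℝ => w p.1 * u p) gg ∧
    Integrable u (gg.withDensity (fun p => ENNReal.ofReal (w p.1))) ∧
    ∫ p, u p ∂(gg.withDensity (fun p => ENNReal.ofReal (w p.1))) = ∫ p, w p.1 * u p ∂gg := by
  have hm : Measurable (fun p : ℝ × ℝ => ENNReal.ofReal (w p.1)) := by fun_prop
  have i1 : Integrable (fun p : ℝ × ℝ => w p.1 * u p) gg := by
    apply hu.bdd_mul (c := 1)
    · exact (by fun_prop : Continuous fun p : ℝ × ℝ => w p.1).aestronglyMeasurable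
    · refine Eventually.of_forall fun p => ?_
      rw [Real.norm_eq_abs, abs_le]
      constructor <;> linarith [(hw01 p.1).1, (hw01 p.1).2]
  refine ⟨i1, ?_, ?_⟩
  · rw [integrable_withDensity_iff_integrable_smul' hm (by simp)]
    simpa [ENNReal.toReal_ofReal (hw01 _).1] using i1
  · rw [integral_withDensity_eq_integral_toReal_smul hm (by simp)]
    simp [ENNReal.toReal_ofReal (hw01 _).1]

lemma MM_integral (f : ℝ → ℝ) (hf : Continuous f) (hf01 : ∀ x, f x ∈ Set.Icc (0:ℝ) 1)
    (u : ℝ × ℝ → ℝ) (hu : Measurable u) (hu1 : Integrable u gg)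
    (hu2 : Integrable (fun p => u (flip1 p)) gg) :
    Integrable (fun p => f p.1 * u p + (1 - f p.1) * u (flip1 p)) gg ∧
    Integrable u (MM f) ∧
    ∫ p, u p ∂(MM f) = ∫ p, (f p.1 * u p + (1 - f p.1) * u (flip1 p)) ∂gg := by
  obtain ⟨a1, a2, a3⟩ := integral_weight f hf (fun x => hf01 x) u hu1
  obtain ⟨b1, b2, b3⟩ := integral_weight (fun x => 1 - f x) (by fun_prop)
    (fun x => ⟨by linarith [(hf01 x).2], by linarith [(hf01 x).1]⟩) _ hu2
  have b2' : Integrable u ((gg.withDensity (fun p => ENNReal.ofReal (1 - f p.1))).map flip1) := by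
    rw [integrable_map_measure hu.aestronglyMeasurable meas_flip1.aemeasurable]
    exact b2
  refine ⟨a1.add b1, a2.add_measure b2', ?_⟩
  unfold MM
  rw [integral_add_measure a2 b2', a3,
    integral_map meas_flip1.aemeasurable hu.aestronglyMeasurable, b3, integral_add a1 b1]

lemma MM_prob (f : ℝ → ℝ) (hf : Continuous f) (hf01 : ∀ x, f x ∈ Set.Icc (0:ℝ) 1) :
    IsProbabilityMeasure (MM f) := by
  obtain ⟨-, h2, h3⟩ := MM_integral f hf hf01 (fun _ => 1) measurable_const
    (integrable_const _) (integrable_const _)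
  have hfin : IsFiniteMeasure (MM f) := by
    rcases integrable_const_iff.mp h2 with h | h
    · norm_num at h
    · exact h
  constructor
  have h4 : (MM f).real univ = 1 := by
    simpa using h3
  rw [measureReal_def] at h4
  rw [← ENNReal.toReal_eq_one_iff]
  exact h4

lemma MM_memLp (f : ℝ → ℝ) (hf : Continuous f) (hf01 : ∀ x, f x ∈ Set.Icc (0:ℝ) 1) :
    MemLp (fun p : ℝ × ℝ => p.1) 2 (MM f) ∧ MemLp (fun p : ℝ × ℝ => p.2) 2 (MM f) := by
  constructor
  · rw [memLp_two_iff_integrable_sq (by fun_prop)]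
    refine (MM_integral f hf hf01 (fun p => p.1 ^ 2) (by fun_prop) memLp_fst.integrable_sq ?_).2.1
    simpa [flip1] using memLp_fst.integrable_sq
  · rw [memLp_two_iff_integrable_sq (by fun_prop)]
    refine (MM_integral f hf hf01 (fun p => p.2 ^ 2) (by fun_prop) memLp_snd.integrable_sq ?_).2.1
    simpa [flip1] using memLp_snd.integrable_sq

lemma Fk_eq (f : ℝ → ℝ) (hf : Continuous f) (hf01 : ∀ x, f x ∈ Set.Icc (0:ℝ) 1) (κ c₁ c₂ : ℝ) :
    Integrable (fun p : ℝ × ℝ => f p.1 * (max (κ - c₁ * p.1 - c₂ * p.2) 0) ^ 2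
      + (1 - f p.1) * (max (κ + c₁ * p.1 - c₂ * p.2) 0) ^ 2) gg ∧
    Fk f κ c₁ c₂ = FF (MM f) (fun p => p.1) (fun p => p.2) κ c₁ c₂ ∧
    Fk f κ c₁ c₂ = Real.sqrt (∫ p : ℝ × ℝ, (f p.1 * (max (κ - c₁ * p.1 - c₂ * p.2) 0) ^ 2
      + (1 - f p.1) * (max (κ + c₁ * p.1 - c₂ * p.2) 0) ^ 2) ∂gg) := by
  have e := phi_memLp gg (fun p => p.1) (fun p => p.2) memLp_fst memLp_snd κ c₁ c₂
  have e' := phi_memLp gg (fun p => p.1) (fun p => p.2) memLp_fst memLp_snd κ (-c₁) c₂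
  obtain ⟨h1, h2, h3⟩ := MM_integral f hf hf01
    (fun p => phi (fun p : ℝ × ℝ => p.1) (fun p : ℝ × ℝ => p.2) κ c₁ c₂ p ^ 2)
    (by unfold phi; fun_prop) e.integrable_sq
    (by simpa [phi, flip1] using e'.integrable_sq)
  simp only [phi, flip1, mul_neg, sub_neg_eq_add] at h1 h3
  have h4 : Fk f κ c₁ c₂ = Real.sqrt (∫ p : ℝ × ℝ, (f p.1 * (max (κ - c₁ * p.1 - c₂ * p.2) 0) ^ 2
      + (1 - f p.1) * (max (κ + c₁ * p.1 - c₂ * p.2) 0) ^ 2) ∂gg) := by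
    unfold Fk gg
    rw [integral_prod]
    exact h1
  refine ⟨h1, ?_, h4⟩
  rw [h4, ← h3]
  rfl

lemma Fk_even (f : ℝ → ℝ) (κ c₁ c₂ : ℝ) : Fk f κ c₁ (-c₂) = Fk f κ c₁ c₂ := by
  unfold Fk
  congr 2
  funext g
  have hm : stdG.map (fun x => -x) = stdG := by
    unfold stdG; rw [gaussianReal_map_neg]; simp
  conv_rhs => rw [← hm]
  rw [integral_map (by fun_prop) (by fun_prop)]
  congr 1
  funext z
  simp

lemma Fk_pos (f : ℝ → ℝ) (hf : Continuous f) (hf01 : ∀ x, f x ∈ Set.Icc (0:ℝ) 1) (κ c₁ c₂ : ℝ)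
    (hκ : 0 < κ) : 0 < Fk f κ c₁ c₂ := by
  obtain ⟨h1, -, h2⟩ := Fk_eq f hf hf01 κ c₁ c₂
  rw [h2]
  apply Real.sqrt_pos.mpr
  have := openPos_stdG
  have : Measure.IsOpenPosMeasure gg := by unfold gg; infer_instance
  have hnn : ∀ p : ℝ × ℝ, 0 ≤ f p.1 * (max (κ - c₁ * p.1 - c₂ * p.2) 0) ^ 2
      + (1 - f p.1) * (max (κ + c₁ * p.1 - c₂ * p.2) 0) ^ 2 := fun p =>
    add_nonneg (mul_nonneg (hf01 p.1).1 (sq_nonneg _))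
      (mul_nonneg (by linarith [(hf01 p.1).2]) (sq_nonneg _))
  rw [integral_pos_iff_support_of_nonneg hnn h1]
  apply IsOpen.measure_pos
  · apply Continuous.isOpen_support
    fun_prop
  · refine ⟨(0, 0), ?_⟩
    simp only [Function.mem_support, mul_zero, sub_zero, add_zero, max_eq_left hκ.le]
    nlinarith [pow_pos hκ 2]

lemma Fk_growth (f : ℝ → ℝ) (hf : Continuous f) (hf01 : ∀ x, f x ∈ Set.Icc (0:ℝ) 1) (κ c t : ℝ)
    (hκ : 0 < κ) (ht : 0 ≤ t) : Fk f κ (t * c) t ≤ κ + t * Fk f 0 c 1 := by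
  rw [(Fk_eq f hf hf01 κ _ _).2.1, (Fk_eq f hf hf01 0 _ _).2.1]
  have := MM_prob f hf hf01
  obtain ⟨h1, h2⟩ := MM_memLp f hf hf01
  exact FF_growth (MM f) _ _ h1 h2 κ c t hκ.le ht

lemma hasDerivAt_of_sandwich (g : ℝ → ℝ) (x a C : ℝ)
    (h1 : ∀ y, g x + a * (y - x) ≤ g y)
    (h2 : ∀ y, g y ≤ g x + a * (y - x) + C * (y - x) ^ 2) : HasDerivAt g a x := by
  rw [hasDerivAt_iff_isLittleO]
  have h3 : (fun y => g y - g x - (y - x) • a) =O[𝓝 x] fun y => (y - x) ^ 2 := by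
    apply Asymptotics.IsBigO.of_bound C
    refine Eventually.of_forall fun y => ?_
    rw [Real.norm_eq_abs, Real.norm_eq_abs, abs_of_nonneg (sq_nonneg (y - x)), abs_of_nonneg]
    · simp only [smul_eq_mul]; linarith [h2 y]
    · simp only [smul_eq_mul]; linarith [h1 y]
  apply h3.trans_isLittleO
  have h4 : Tendsto (fun y : ℝ => y - x) (𝓝 x) (𝓝 0) := by
    have : Continuous fun y : ℝ => y - x := by fun_prop
    simpa using this.tendsto x
  have := (Asymptotics.isLittleO_pow_id (𝕜 := ℝ) (n := 2) (by norm_num)).comp_tendsto h4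
  simpa [Function.comp_def] using this

lemma Fk_bounds (f : ℝ → ℝ) (hf : Continuous f) (hf01 : ∀ x, f x ∈ Set.Icc (0:ℝ) 1) (κ : ℝ)
    (hκ : 0 < κ) (c₁ c₂ : ℝ) :
    ∃ C : ℝ, 0 ≤ C ∧ ∀ c₁' c₂',
      Fk f κ c₁ c₂ + d1F f κ c₁ c₂ * (c₁' - c₁) + d2F f κ c₁ c₂ * (c₂' - c₂) ≤ Fk f κ c₁' c₂' ∧
      Fk f κ c₁' c₂' ≤ Fk f κ c₁ c₂ + d1F f κ c₁ c₂ * (c₁' - c₁) + d2F f κ c₁ c₂ * (c₂' - c₂)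
        + C * ((c₁' - c₁) ^ 2 + (c₂' - c₂) ^ 2) := by
  have := MM_prob f hf hf01
  obtain ⟨m1, m2⟩ := MM_memLp f hf hf01
  have hpos := Fk_pos f hf hf01 κ c₁ c₂ hκ
  rw [(Fk_eq f hf hf01 κ _ _).2.1] at hpos
  obtain ⟨a, b, C, hC, h⟩ := FF_bounds (MM f) _ _ m1 m2 κ c₁ c₂ hpos
  simp only [← (Fk_eq f hf hf01 κ _ _).2.1] at h
  have ha : d1F f κ c₁ c₂ = a := by
    apply HasDerivAt.deriv
    apply hasDerivAt_of_sandwich _ _ _ C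
    · intro y; have := (h y c₂).1; simpa using this
    · intro y; have := (h y c₂).2; simpa using this
  have hb : d2F f κ c₁ c₂ = b := by
    apply HasDerivAt.deriv
    apply hasDerivAt_of_sandwich _ _ _ C
    · intro y; have := (h c₁ y).1; simpa using this
    · intro y; have := (h c₁ y).2; simpa using this
  rw [ha, hb]
  exact ⟨C, hC, h⟩

lemma d2F_zero (f : ℝ → ℝ) (hf : Continuous f) (hf01 : ∀ x, f x ∈ Set.Icc (0:ℝ) 1) (κ : ℝ)
    (hκ : 0 < κ) (c₁ : ℝ) : d2F f κ c₁ 0 = 0 := by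
  obtain ⟨C, hC, h⟩ := Fk_bounds f hf hf01 κ hκ c₁ 0
  by_contra hne
  set b := d2F f κ c₁ 0
  have k : ∀ t : ℝ, b * t ≤ -(b * t) + C * t ^ 2 := by
    intro t
    have h1 := (h c₁ t).1
    have h2 := (h c₁ (-t)).2
    rw [Fk_even] at h2
    simp only [sub_self, mul_zero, sub_zero, add_zero, zero_pow, ne_eq, OfNat.ofNat_ne_zero,
      not_false_eq_true, zero_add] at h1 h2
    nlinarith
  have k1 := k (b / (C + 1))
  have hC1 : 0 < C + 1 := by linarith
  have hb2 : 0 < b ^ 2 := by positivity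
  have e1 : b * (b / (C + 1)) = b ^ 2 / (C + 1) := by ring
  have e2 : C * (b / (C + 1)) ^ 2 = (b ^ 2 / (C + 1)) * (C / (C + 1)) := by field_simp
  have e3 : C / (C + 1) < 1 := by rw [div_lt_one hC1]; linarith
  have e4 : 0 < b ^ 2 / (C + 1) := by positivity
  rw [e1, e2] at k1
  nlinarith

lemma d2F_nonneg (f : ℝ → ℝ) (hf : Continuous f) (hf01 : ∀ x, f x ∈ Set.Icc (0:ℝ) 1) (κ : ℝ)
    (hκ : 0 < κ) (c₁ c₂ : ℝ) (hc : 0 ≤ c₂) : 0 ≤ d2F f κ c₁ c₂ := by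
  rcases hc.eq_or_lt with h0 | h0
  · rw [← h0, d2F_zero f hf hf01 κ hκ]
  · obtain ⟨C, hC, h⟩ := Fk_bounds f hf hf01 κ hκ c₁ c₂
    have h1 := (h c₁ (-c₂)).1
    rw [Fk_even] at h1
    by_contra hneg
    push Not at hneg
    nlinarith

end concF

/-! ### Abstract Hilbert space part -/

section hilb

/-- Properties of the function `F` and its gradient `(a, b)`. -/
structure FH (F a b : ℝ → ℝ → ℝ) : Prop where
  bounds : ∀ c₁ c₂, ∃ C : ℝ, 0 ≤ C ∧ ∀ c₁' c₂',
      F c₁ c₂ + a c₁ c₂ * (c₁' - c₁) + b c₁ c₂ * (c₂' - c₂) ≤ F c₁' c₂' ∧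
      F c₁' c₂' ≤ F c₁ c₂ + a c₁ c₂ * (c₁' - c₁) + b c₁ c₂ * (c₂' - c₂)
        + C * ((c₁' - c₁) ^ 2 + (c₂' - c₂) ^ 2)
  bnn : ∀ c₁ c₂, 0 ≤ c₂ → 0 ≤ b c₁ c₂
  bz : ∀ c₁, b c₁ 0 = 0
  nn : ∀ c₁ c₂, 0 ≤ F c₁ c₂

variable {H : Type*} [NormedAddCommGroup H] [InnerProductSpace ℝ H]

/-- component along `w` -/
def cA (w x : H) : ℝ := inner ℝ x w
/-- orthogonal component -/
def oA (w x : H) : H := x - cA w x • w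
/-- norm of orthogonal component -/
def cB (w x : H) : ℝ := ‖oA w x‖
/-- the function `F` of a vector -/
def NN (F : ℝ → ℝ → ℝ) (w x : H) : ℝ := F (cA w x) (cB w x)
/-- gradient of `NN` -/
def pA (a b : ℝ → ℝ → ℝ) (w x : H) : H :=
  a (cA w x) (cB w x) • w + (b (cA w x) (cB w x) * (cB w x)⁻¹) • oA w x

lemma oA_inner_w (w x : H) (hw : ‖w‖ = 1) : inner ℝ (oA w x) w = 0 := by
  simp [oA, inner_sub_left, inner_smul_left, hw, cA]

lemma oA_inner (w x y : H) (hw : ‖w‖ = 1) : inner ℝ (oA w x) y = inner ℝ (oA w x) (oA w y) := by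
  conv_rhs => rw [oA.eq_def w y]
  rw [inner_sub_right, inner_smul_right, oA_inner_w w x hw]; simp

lemma oA_sub (w x y : H) : oA w y - oA w x = oA w (y - x) := by
  simp only [oA, cA, inner_sub_left, sub_smul]; abel

lemma norm_sq_split (w x : H) (hw : ‖w‖ = 1) : ‖x‖ ^ 2 = cA w x ^ 2 + cB w x ^ 2 := by
  have h : x = cA w x • w + oA w x := by simp [oA]
  have h2 : ‖cA w x • w + oA w x‖ ^ 2 = cA w x ^ 2 + cB w x ^ 2 := by
    rw [norm_add_sq_real, inner_smul_left, real_inner_comm, oA_inner_w w x hw, norm_smul, hw]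
    simp [cB]
  rw [← h2, ← h]

lemma pA_inner (a b : ℝ → ℝ → ℝ) (w x y : H) (hw : ‖w‖ = 1) :
    inner ℝ (pA a b w x) (y - x) = a (cA w x) (cB w x) * (cA w y - cA w x)
      + (b (cA w x) (cB w x) * (cB w x)⁻¹) * (inner ℝ (oA w x) (oA w y) - cB w x ^ 2) := by
  have h1 : inner ℝ (oA w x) x = cB w x ^ 2 := by
    rw [oA_inner w x x hw, real_inner_self_eq_norm_sq]; rfl
  rw [pA, inner_add_left, inner_smul_left, inner_smul_left, inner_sub_right (oA w x), h1,
    oA_inner w x y hw, inner_sub_right, real_inner_comm, real_inner_comm x w]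
  simp [cA]

lemma b_cancel (F a b : ℝ → ℝ → ℝ) (hF : FH F a b) (c d : ℝ) :
    b c d * d⁻¹ * d = b c d := by
  by_cases h : d = 0
  · rw [h, hF.bz]; simp
  · field_simp

lemma NN_lower (F a b : ℝ → ℝ → ℝ) (hF : FH F a b) (w x y : H) (hw : ‖w‖ = 1) :
    NN F w x + inner ℝ (pA a b w x) (y - x) ≤ NN F w y := by
  obtain ⟨C, hC, h⟩ := hF.bounds (cA w x) (cB w x)
  refine le_trans ?_ (h (cA w y) (cB w y)).1
  rw [pA_inner a b w x y hw, NN, add_assoc, ← add_assoc, ← add_assoc]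
  apply add_le_add_right
  have h1 : inner ℝ (oA w x) (oA w y) ≤ cB w x * cB w y := real_inner_le_norm _ _
  have h2 : 0 ≤ b (cA w x) (cB w x) * (cB w x)⁻¹ :=
    mul_nonneg (hF.bnn _ _ (norm_nonneg _)) (inv_nonneg.mpr (norm_nonneg _))
  have h3 := b_cancel F a b hF (cA w x) (cB w x)
  calc _ ≤ b (cA w x) (cB w x) * (cB w x)⁻¹ * (cB w x * cB w y - cB w x ^ 2) :=
        mul_le_mul_of_nonneg_left (by linarith) h2
    _ = b (cA w x) (cB w x) * (cB w x)⁻¹ * cB w x * (cB w y - cB w x) := by ring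
    _ = _ := by rw [h3]

lemma NN_upper (F a b : ℝ → ℝ → ℝ) (hF : FH F a b) (w x : H) (hw : ‖w‖ = 1) :
    ∃ C : ℝ, 0 ≤ C ∧ ∀ y, NN F w y ≤ NN F w x + inner ℝ (pA a b w x) (y - x) + C * ‖y - x‖ ^ 2 := by
  obtain ⟨C, hC, h⟩ := hF.bounds (cA w x) (cB w x)
  set β := b (cA w x) (cB w x) with hβ
  have hβ0 : 0 ≤ β := hF.bnn _ _ (norm_nonneg _)
  have hc0 : 0 ≤ cB w x := norm_nonneg _
  refine ⟨C + β * (cB w x)⁻¹, by positivity, fun y => ?_⟩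
  refine le_trans (h (cA w y) (cB w y)).2 ?_
  rw [pA_inner a b w x y hw, NN]
  have k1 : ‖y - x‖ ^ 2 = (cA w y - cA w x) ^ 2 + ‖oA w y - oA w x‖ ^ 2 := by
    rw [norm_sq_split w (y - x) hw, oA_sub]
    simp [cA, cB, inner_sub_left]
  have k2 : (cB w y - cB w x) ^ 2 ≤ ‖oA w y - oA w x‖ ^ 2 := by
    apply sq_le_sq'
    · have := norm_sub_norm_le (oA w x) (oA w y)
      rw [norm_sub_rev] at this
      simp only [cB]; linarith
    · exact norm_sub_norm_le _ _
  have k3 : ‖oA w y - oA w x‖ ^ 2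
      = cB w y ^ 2 - 2 * inner ℝ (oA w x) (oA w y) + cB w x ^ 2 := by
    rw [norm_sub_sq_real, real_inner_comm]; rfl
  have k4 : β * (cB w y - cB w x) ≤ β * (cB w x)⁻¹ * (inner ℝ (oA w x) (oA w y) - cB w x ^ 2)
      + β * (cB w x)⁻¹ * ‖y - x‖ ^ 2 := by
    have h3 : β * (cB w x)⁻¹ * cB w x = β := b_cancel F a b hF (cA w x) (cB w x)
    have h2 : 0 ≤ β * (cB w x)⁻¹ := by positivity
    set r := β * (cB w x)⁻¹
    rw [← h3]
    have : r * (cB w x * (cB w y - cB w x)) ≤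
        r * (inner ℝ (oA w x) (oA w y) - cB w x ^ 2 + ‖y - x‖ ^ 2) := by
      apply mul_le_mul_of_nonneg_left _ h2
      nlinarith [sq_nonneg (cB w y - cB w x), sq_nonneg (cA w y - cA w x),
        sq_nonneg (‖oA w y - oA w x‖)]
    nlinarith
  have k5 : C * ((cA w y - cA w x) ^ 2 + (cB w y - cB w x) ^ 2) ≤ C * ‖y - x‖ ^ 2 := by
    apply mul_le_mul_of_nonneg_left _ hC
    linarith
  linarith

/-- Existence of minimizers for strongly convex functions. -/
lemma exists_min [CompleteSpace H] (Φ : H → ℝ) (g : H → H) (s : ℝ) (hs : 0 < s)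
    (h : ∀ x y, Φ x + inner ℝ (g x) (y - x) + s / 2 * ‖y - x‖ ^ 2 ≤ Φ y) :
    ∃ x, ∀ y, Φ x ≤ Φ y := by
  have hbdd : BddBelow (range Φ) := by
    refine ⟨Φ 0 - ‖g 0‖ ^ 2 / (2 * s), ?_⟩
    rintro _ ⟨y, rfl⟩
    have h1 := h 0 y
    have h2 : -(‖g 0‖ * ‖y‖) ≤ inner ℝ (g 0) y := by
      have := abs_real_inner_le_norm (g 0) y
      linarith [neg_abs_le (inner ℝ (g 0) y)]
    simp only [sub_zero] at h1
    have h3 : ‖g 0‖ * ‖y‖ ≤ ‖g 0‖ ^ 2 / (2 * s) + s / 2 * ‖y‖ ^ 2 := by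
      have : ‖g 0‖ ^ 2 / (2 * s) + s / 2 * ‖y‖ ^ 2 - ‖g 0‖ * ‖y‖
          = (‖g 0‖ - s * ‖y‖) ^ 2 / (2 * s) := by
        field_simp; ring
      have h4 : 0 ≤ (‖g 0‖ - s * ‖y‖) ^ 2 / (2 * s) := by positivity
      linarith
    linarith
  set I := iInf Φ with hI
  have hle : ∀ y, I ≤ Φ y := fun y => ciInf_le hbdd y
  have hex : ∀ n : ℕ, ∃ x, Φ x < I + 1 / ((n : ℝ) + 1) := fun n =>
    exists_lt_of_ciInf_lt (lt_add_of_pos_right _ (by positivity))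
  choose u hu using hex
  have mid : ∀ x y, s / 4 * ‖y - x‖ ^ 2 ≤ Φ x + Φ y - 2 * I := by
    intro x y
    set m := (1 / 2 : ℝ) • (x + y) with hm
    have h1 := h m x
    have h2 := h m y
    have e1 : x - m = (1 / 2 : ℝ) • (x - y) := by rw [hm]; module
    have e2 : y - m = (1 / 2 : ℝ) • (y - x) := by rw [hm]; module
    have e3 : x - y = -(y - x) := by abel
    rw [e1, e3, smul_neg, inner_neg_right, norm_neg] at h1
    rw [e2] at h2
    rw [norm_smul] at h1 h2
    have := hle m
    norm_num [mul_pow] at h1 h2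
    nlinarith
  have hcau : CauchySeq u := by
    rw [Metric.cauchySeq_iff']
    intro ε hε
    obtain ⟨n, hn⟩ := exists_nat_one_div_lt (show 0 < s * ε ^ 2 / 8 by positivity)
    refine ⟨n, fun k hk => ?_⟩
    have h1 := mid (u n) (u k)
    have h2 := hu n
    have h3 := hu k
    have h4 : 1 / ((k : ℝ) + 1) ≤ 1 / ((n : ℝ) + 1) := Nat.one_div_le_one_div hk
    rw [dist_eq_norm]
    have h5 : s / 4 * ‖u k - u n‖ ^ 2 < s / 4 * ε ^ 2 := by linarith
    have h6 : ‖u k - u n‖ ^ 2 < ε ^ 2 := lt_of_mul_lt_mul_left h5 (by positivity)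
    exact lt_of_pow_lt_pow_left₀ 2 hε.le h6
  obtain ⟨x, hx⟩ := cauchySeq_tendsto_of_complete hcau
  refine ⟨x, fun y => le_trans ?_ (hle y)⟩
  have t1 : Tendsto (fun n : ℕ => I + 1 / ((n : ℝ) + 1) - inner ℝ (g x) (u n - x)) atTop (𝓝 I) := by
    have a1 : Tendsto (fun n : ℕ => inner ℝ (g x) (u n - x)) atTop (𝓝 0) := by
      have : Continuous fun z : H => inner ℝ (g x) (z - x) := by fun_prop
      have := (this.tendsto x).comp hx
      simpa [Function.comp_def] using this
    have a2 := tendsto_one_div_add_atTop_nhds_zero_nat (𝕜 := ℝ)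
    have := (a2.const_add I).sub a1
    simpa using this
  apply ge_of_tendsto' t1
  intro n
  have h1 := h x (u n)
  have h2 := hu n
  have : 0 ≤ s / 2 * ‖u n - x‖ ^ 2 := by positivity
  linarith

lemma lin_zero_of_quad (l C : ℝ) (h : ∀ t : ℝ, 0 ≤ t * l + C * t ^ 2) : l = 0 := by
  by_contra hne
  have h1 := h (-l / (|C| + 1))
  have hC : 0 < |C| + 1 := by positivity
  have h2 : C ≤ |C| := le_abs_self C
  have hl : 0 < l ^ 2 := by positivity
  have e : -l / (|C| + 1) * l + C * (-l / (|C| + 1)) ^ 2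
      = (l ^ 2 / (|C| + 1) ^ 2) * (C - (|C| + 1)) := by field_simp; ring
  rw [e] at h1
  have : 0 < l ^ 2 / (|C| + 1) ^ 2 := by positivity
  nlinarith

variable [CompleteSpace H]

/-- For each `s`, the unique minimizer and its stationarity. -/
lemma exists_hs (F a b : ℝ → ℝ → ℝ) (hF : FH F a b) (w Γ : H) (hw : ‖w‖ = 1)
    (S : H →L[ℝ] H) (hS : ∀ x y, inner ℝ (S x) y = inner ℝ x (S y)) (s : ℝ) (hs : 0 < s) :
    ∃ h : H, S (pA a b w (S h) + Γ) + s • h = 0 ∧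
      ∀ y, NN F w (S h) + inner ℝ (S h) Γ + s / 2 * ‖h‖ ^ 2 + s / 2 * ‖y - h‖ ^ 2
        ≤ NN F w (S y) + inner ℝ (S y) Γ + s / 2 * ‖y‖ ^ 2 := by
  set Φ : H → ℝ := fun y => NN F w (S y) + inner ℝ (S y) Γ + s / 2 * ‖y‖ ^ 2 with hΦ
  set g : H → H := fun x => S (pA a b w (S x) + Γ) + s • x with hg
  have gi : ∀ x y, inner ℝ (g x) (y - x) = inner ℝ (pA a b w (S x)) (S y - S x)
      + inner ℝ (S y) Γ - inner ℝ (S x) Γ + s * inner ℝ x (y - x) := by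
    intro x y
    simp only [hg]
    rw [inner_add_left, hS, inner_smul_left, map_sub, inner_add_left]
    simp only [inner_sub_right, real_inner_comm Γ, conj_trivial]
    ring
  have ns : ∀ x y : H, ‖y‖ ^ 2 = ‖x‖ ^ 2 + 2 * inner ℝ x (y - x) + ‖y - x‖ ^ 2 := by
    intro x y
    have := norm_add_sq_real x (y - x)
    rwa [add_sub_cancel] at this
  have hlow : ∀ x y, Φ x + inner ℝ (g x) (y - x) + s / 2 * ‖y - x‖ ^ 2 ≤ Φ y := by
    intro x y
    have h1 := NN_lower F a b hF w (S x) (S y) hw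
    rw [gi]
    simp only [hΦ]
    rw [ns x y]
    linarith
  obtain ⟨h, hh⟩ := exists_min Φ g s hs hlow
  have hg0 : g h = 0 := by
    obtain ⟨C, hC, hup⟩ := NN_upper F a b hF w (S h) hw
    have key : inner ℝ (g h) (g h) = 0 := by
      apply lin_zero_of_quad _ (C * ‖S (g h)‖ ^ 2 + s / 2 * ‖g h‖ ^ 2)
      intro t
      have h1 := hh (h + t • g h)
      have h2 := hup (S (h + t • g h))
      have h3 := gi h (h + t • g h)
      have h4 := ns h (h + t • g h)
      have e1 : S (h + t • g h) - S h = t • S (g h) := by simp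
      have e2 : h + t • g h - h = t • g h := by simp
      rw [e1] at h2 h3
      rw [e2] at h3 h4
      rw [norm_smul, mul_pow, Real.norm_eq_abs, sq_abs] at h2 h4
      rw [inner_smul_right (g h)] at h3
      simp only [hΦ] at h1
      rw [h4] at h1
      linarith
    exact inner_self_eq_zero.mp key
  refine ⟨h, hg0, fun y => ?_⟩
  have := hlow h y
  rw [hg0, inner_zero_left, add_zero] at this
  exact this

lemma kkt_unique (F a b : ℝ → ℝ → ℝ) (hF : FH F a b) (w Γ : H) (hw : ‖w‖ = 1)
    (S : H →L[ℝ] H) (hS : ∀ x y, inner ℝ (S x) y = inner ℝ x (S y)) (s s' : ℝ) (hs : 0 < s)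
    (hs' : 0 < s') (h h' : H) (hn : ‖h‖ = 1) (hn' : ‖h'‖ = 1)
    (k : S (pA a b w (S h) + Γ) + s • h = 0) (k' : S (pA a b w (S h') + Γ) + s' • h' = 0) :
    h = h' ∧ s = s' := by
  have key : ∀ (s : ℝ) (h h' : H), ‖h‖ = 1 → S (pA a b w (S h) + Γ) + s • h = 0 →
      NN F w (S h) + inner ℝ (S h) Γ + s * (1 - inner ℝ h h')
        ≤ NN F w (S h') + inner ℝ (S h') Γ := by
    intro s h h' hn k
    have h1 := NN_lower F a b hF w (S h) (S h') hw
    have h2 : inner ℝ (S (pA a b w (S h) + Γ) + s • h) (h' - h) = 0 := by rw [k, inner_zero_left]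
    rw [inner_add_left, hS, inner_smul_left, map_sub, inner_add_left] at h2
    have h3 : inner ℝ h h = (1 : ℝ) := by rw [real_inner_self_eq_norm_sq, hn]; norm_num
    simp only [inner_sub_right, real_inner_comm Γ, conj_trivial, h3] at h1 h2 ⊢
    linarith
  have h1 := key s h h' hn k
  have h2 := key s' h' h hn' k'
  rw [real_inner_comm h h'] at h2
  have h3 : (s + s') * (1 - inner ℝ h h') ≤ 0 := by linarith
  have h4 : (1:ℝ) ≤ inner ℝ h h' := by
    by_contra hc
    push Not at hc
    nlinarith
  have h5 : ‖h - h'‖ ^ 2 ≤ 0 := by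
    rw [norm_sub_sq_real, hn, hn']; linarith
  have h6 : h = h' := by
    have : ‖h - h'‖ = 0 := by
      have := sq_nonneg ‖h - h'‖
      exact pow_eq_zero_iff (two_ne_zero) |>.mp (le_antisymm h5 this)
    exact sub_eq_zero.mp (norm_eq_zero.mp this)
  refine ⟨h6, ?_⟩
  rw [← h6] at k'
  have h7 : s • h = s' • h := by
    have := k.trans k'.symm
    exact add_left_cancel this
  have h8 : h ≠ 0 := by
    intro h0; rw [h0, norm_zero] at hn; norm_num at hn
  exact smul_left_injective ℝ h8 h7

lemma kkt_exists (F a b : ℝ → ℝ → ℝ) (hF : FH F a b) (w Γ : H) (hw : ‖w‖ = 1)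
    (S : H →L[ℝ] H) (hS : ∀ x y, inner ℝ (S x) y = inner ℝ x (S y))
    (hunb : ∀ L : ℝ, ∃ y, NN F w (S y) + inner ℝ (S y) Γ < L) :
    ∃ (s : ℝ) (h : H), 0 < s ∧ ‖h‖ = 1 ∧ S (pA a b w (S h) + Γ) + s • h = 0 := by
  have hex : ∀ s : ℝ, 0 < s → _ := fun s hs => exists_hs F a b hF w Γ hw S hS s hs
  choose! hh hk hm using hex
  set R : H → ℝ := fun y => NN F w (S y) + inner ℝ (S y) Γ with hR
  set K := ‖S‖ * ‖Γ‖ with hK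
  have hK0 : 0 ≤ K := by positivity
  have Rlow : ∀ y, -(K * ‖y‖) ≤ R y := by
    intro y
    have h1 : 0 ≤ NN F w (S y) := hF.nn _ _
    have h2 := abs_real_inner_le_norm (S y) Γ
    have h3 := neg_abs_le (inner ℝ (S y) Γ)
    have h4 : ‖S y‖ * ‖Γ‖ ≤ ‖S‖ * ‖y‖ * ‖Γ‖ := by
      gcongr; exact S.le_opNorm y
    simp only [hR, hK]
    nlinarith
  -- large s
  have big : ∃ s, 0 < s ∧ ‖hh s‖ ≤ 1 := by
    have hR0 : 0 ≤ R 0 := by have := Rlow 0; simpa using this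
    refine ⟨2 * (R 0 + K) + 1, by positivity, ?_⟩
    set s := 2 * (R 0 + K) + 1 with hs
    have hs0 : 0 < s := by positivity
    have h1 := hm s hs0 0
    have h2 := Rlow (hh s)
    change R (hh s) + s / 2 * ‖hh s‖ ^ 2 + s / 2 * ‖0 - hh s‖ ^ 2 ≤ R 0 + s / 2 * ‖(0:H)‖ ^ 2 at h1
    simp only [zero_sub, norm_neg, norm_zero] at h1
    by_contra hc
    push Not at hc
    set r := ‖hh s‖
    have : s * r ^ 2 ≤ R 0 + K * r := by nlinarith
    have h5 : R 0 ≤ R 0 * r ^ 2 := le_mul_of_one_le_right hR0 (by nlinarith)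
    have h6 : K * r ≤ K * r ^ 2 := by 
      nlinarith [mul_nonneg (mul_nonneg hK0 (by linarith : (0:ℝ) ≤ r)) (by linarith : (0:ℝ) ≤ r - 1)]
    have h7 : s * r ^ 2 ≤ (R 0 + K) * r ^ 2 := by linarith
    have h8 : s ≤ R 0 + K := le_of_mul_le_mul_right h7 (by positivity)
    linarith
  have small : ∃ s, 0 < s ∧ 1 ≤ ‖hh s‖ := by
    obtain ⟨y, hy⟩ := hunb (-K - 1)
    refine ⟨1 / (‖y‖ ^ 2 + 1), by positivity, ?_⟩
    set s := 1 / (‖y‖ ^ 2 + 1) with hs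
    have hs0 : 0 < s := by positivity
    have h1 := hm s hs0 y
    have h2 := Rlow (hh s)
    change R (hh s) + s / 2 * ‖hh s‖ ^ 2 + s / 2 * ‖y - hh s‖ ^ 2 ≤ R y + s / 2 * ‖y‖ ^ 2 at h1
    change R y < _ at hy
    have h3 : s * ‖y‖ ^ 2 ≤ 1 := by
      rw [hs, one_div, inv_mul_le_iff₀ (by positivity)]; linarith
    by_contra hc
    push Not at hc
    have h4 : K * ‖hh s‖ ≤ K := by nlinarith
    have h5 : 0 ≤ s / 2 * ‖hh s‖ ^ 2 := by positivity
    have h6 : 0 ≤ s / 2 * ‖y - hh s‖ ^ 2 := by positivity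
    linarith
  have hcont : ContinuousOn (fun s => ‖hh s‖) (Ioi 0) := by
    have lip : ∀ s t : ℝ, 0 < s → 0 < t →
        |‖hh s‖ - ‖hh t‖| * (s + t) ≤ |s - t| * (‖hh s‖ + ‖hh t‖) := by
      intro s t hs ht
      have h1 := hm s hs (hh t)
      have h2 := hm t ht (hh s)
      rw [norm_sub_rev] at h2
      have h3 := abs_norm_sub_norm_le (hh s) (hh t)
      rw [norm_sub_rev] at h3
      set α := ‖hh s‖
      set β := ‖hh t‖
      set δ := ‖hh t - hh s‖
      have hα : 0 ≤ α := norm_nonneg _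
      have hβ : 0 ≤ β := norm_nonneg _
      have h4 : (s + t) * δ ^ 2 ≤ (s - t) * (β ^ 2 - α ^ 2) := by nlinarith
      have h5 : |α - β| ^ 2 ≤ δ ^ 2 := by gcongr
      have h6 : (s - t) * (β ^ 2 - α ^ 2) ≤ |s - t| * (|α - β| * (α + β)) := by
        calc (s - t) * (β ^ 2 - α ^ 2) ≤ |(s - t) * (β ^ 2 - α ^ 2)| := le_abs_self _
          _ = |s - t| * (|α - β| * (α + β)) := by
            rw [abs_mul, show β ^ 2 - α ^ 2 = -((α - β) * (α + β)) by ring, abs_neg, abs_mul,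
              abs_of_nonneg (by positivity : 0 ≤ α + β)]
      rcases (abs_nonneg (α - β)).eq_or_lt with h0 | h0
      · rw [← h0]; simp; positivity
      · have h7 : |α - β| * (|α - β| * (s + t)) ≤ |α - β| * (|s - t| * (α + β)) := by nlinarith
        exact le_of_mul_le_mul_left h7 h0
    intro s hs
    have hs : 0 < s := hs
    apply ContinuousAt.continuousWithinAt
    rw [ContinuousAt, tendsto_iff_norm_sub_tendsto_zero]
    have hbound : ∀ᶠ t in 𝓝 s, ‖‖hh t‖ - ‖hh s‖‖ ≤ |s - t| * (3 * ‖hh s‖ / s + ‖hh s‖ / s) := by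
      have hnear : ∀ᶠ t in 𝓝 s, |t - s| < s / 2 := by
        have := Metric.ball_mem_nhds s (half_pos hs)
        filter_upwards [this] with t ht
        simpa [Real.dist_eq] using ht
      filter_upwards [hnear] with t ht
      rw [abs_lt] at ht
      have ht0 : 0 < t := by linarith
      have h1 := lip s t hs ht0
      rw [Real.norm_eq_abs, abs_sub_comm]
      set α := ‖hh s‖
      set β := ‖hh t‖
      have hα : 0 ≤ α := norm_nonneg _
      have hβ : 0 ≤ β := norm_nonneg _
      have h2 : |s - t| ≤ s / 2 := by rw [abs_le]; constructor <;> linarith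
      have h3 : β ≤ 3 * α := by
        by_contra hc
        push Not at hc
        have h4 : β - α ≤ |α - β| := by rw [abs_sub_comm]; exact le_abs_self _
        have h5 : |s - t| * (α + β) ≤ s / 2 * (α + β) := by gcongr
        have h6 : (β - α) * (3 / 2 * s) ≤ |α - β| * (s + t) := by
          apply mul_le_mul h4 (by linarith) (by positivity) (by positivity)
        nlinarith
      have h4 : |α - β| * s ≤ |s - t| * (3 * α + α) := by
        have : |α - β| * s ≤ |α - β| * (s + t) := by gcongr; linarith
        have h5 : |s - t| * (α + β) ≤ |s - t| * (3 * α + α) :=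
          mul_le_mul_of_nonneg_left (by linarith) (abs_nonneg _)
        linarith
      calc |α - β| ≤ |s - t| * (3 * α + α) / s := by rw [le_div_iff₀ hs]; exact h4
        _ = _ := by ring
    apply squeeze_zero' (Eventually.of_forall fun _ => norm_nonneg _) hbound
    have : Continuous fun t : ℝ => |s - t| * (3 * ‖hh s‖ / s + ‖hh s‖ / s) := by fun_prop
    simpa using this.tendsto s
  obtain ⟨s1, hs1, hb⟩ := big
  obtain ⟨s2, hs2, hsm⟩ := small
  have hivt := isPreconnected_Ioi.intermediate_value (a := s1) (b := s2) hs1 hs2 hcont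
  obtain ⟨s, hs, hs'⟩ := hivt ⟨hb, hsm⟩
  exact ⟨s, hh s, hs, hs', hk s hs⟩

end hilb

/-! ### Passage to `L²(P)` -/

section conc

lemma inner_toLp' (P : Measure Pt) (u v : Pt → ℝ) (x y : Lp ℝ 2 P)
    (hx : x =ᵐ[P] u) (hy : y =ᵐ[P] v) : inner ℝ x y = ∫ q, u q * v q ∂P := by
  rw [L2.inner_def]
  apply integral_congr_ae
  filter_upwards [hx, hy] with q h1 h2
  simp [h1, h2, mul_comm]

lemma norm_sq_toLp' (P : Measure Pt) (u : Pt → ℝ) (x : Lp ℝ 2 P)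
    (hx : x =ᵐ[P] u) : ‖x‖ ^ 2 = ∫ q, u q ^ 2 ∂P := by
  rw [← real_inner_self_eq_norm_sq, inner_toLp' P u u x x hx hx]
  simp [sq]

lemma mulOp (P : Measure Pt) (m : Pt → ℝ) (hm : Measurable m) (C : ℝ)
    (hb : ∀ᵐ q ∂P, ‖m q‖ ≤ C) :
    ∃ S : Lp ℝ 2 P →L[ℝ] Lp ℝ 2 P, ∀ h : Lp ℝ 2 P, S h =ᵐ[P] fun q => m q * h q := by
  have hmem : ∀ h : Lp ℝ 2 P, MemLp (fun q => m q * h q) 2 P := by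
    intro h
    apply (Lp.memLp h).of_le_mul (c := C)
    · exact hm.aestronglyMeasurable.mul (Lp.aestronglyMeasurable h)
    · filter_upwards [hb] with q hq
      rw [norm_mul]; gcongr
  let L : Lp ℝ 2 P →ₗ[ℝ] Lp ℝ 2 P :=
    { toFun := fun h => (hmem h).toLp _
      map_add' := by
        intro x y
        apply Lp.ext
        filter_upwards [(hmem (x + y)).coeFn_toLp, (hmem x).coeFn_toLp, (hmem y).coeFn_toLp,
          Lp.coeFn_add x y, Lp.coeFn_add ((hmem x).toLp _) ((hmem y).toLp _)] with q h1 h2 h3 h4 h5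
        rw [h1, h5, Pi.add_apply, h2, h3, h4, Pi.add_apply]; ring
      map_smul' := by
        intro c x
        apply Lp.ext
        filter_upwards [(hmem (c • x)).coeFn_toLp, (hmem x).coeFn_toLp,
          Lp.coeFn_smul c x, Lp.coeFn_smul c ((hmem x).toLp _)] with q h1 h2 h3 h4
        simp only [RingHom.id_apply]
        rw [h1, h4, Pi.smul_apply, h2, h3, Pi.smul_apply, smul_eq_mul, smul_eq_mul]; ring }
  refine ⟨L.mkContinuous C ?_, ?_⟩
  · intro h
    apply Lp.norm_le_mul_norm_of_ae_le_mul
    filter_upwards [(hmem h).coeFn_toLp, hb] with q h1 h2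
    change ‖((hmem h).toLp _ : Pt → ℝ) q‖ ≤ _
    rw [h1, norm_mul]; gcongr
  · intro h
    exact (hmem h).coeFn_toLp

lemma mulOp_symm (P : Measure Pt) (m : Pt → ℝ) (S : Lp ℝ 2 P →L[ℝ] Lp ℝ 2 P)
    (hS : ∀ h : Lp ℝ 2 P, S h =ᵐ[P] fun q => m q * h q) (x y : Lp ℝ 2 P) :
    inner ℝ (S x) y = inner ℝ x (S y) := by
  rw [inner_toLp' P _ y (S x) y (hS x) ae_eq_rfl, inner_toLp' P x _ x (S y) ae_eq_rfl (hS y)]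
  congr 1; funext q; ring

lemma kkt_pt (x σ β a c₁ W G h : ℝ) (hx : 0 < x) (hσ : 0 < σ) (hβ : 0 ≤ β) :
    x * (a * W + β * (x * h - c₁ * W) + G) + σ * h = 0 ↔
      h = -((G + (a - c₁ * β) * W) / (β * x + σ * x⁻¹)) := by
  have hD : 0 < β * x + σ * x⁻¹ := by positivity
  have e : x * (a * W + β * (x * h - c₁ * W) + G) + σ * h
      = x * (h * (β * x + σ * x⁻¹) + (G + (a - c₁ * β) * W)) := by
    field_simp; ring
  rw [e, mul_eq_zero, ← neg_div, eq_div_iff hD.ne']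
  constructor
  · rintro (h1 | h1)
    · exact absurd h1 hx.ne'
    · linarith
  · intro h1; right; linarith

variable (f : ℝ → ℝ) (P : Measure Pt)

lemma pA_coe (a b : ℝ → ℝ → ℝ) (w Γ h : Lp ℝ 2 P) (S : Lp ℝ 2 P →L[ℝ] Lp ℝ 2 P)
    (Wf Gf m : Pt → ℝ) (hw : w =ᵐ[P] Wf) (hΓ : Γ =ᵐ[P] Gf)
    (hS : ∀ h : Lp ℝ 2 P, S h =ᵐ[P] fun q => m q * h q) (σ : ℝ) :
    S (pA a b w (S h) + Γ) + σ • h = 0 ↔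
     ∀ᵐ q ∂P, m q * (a (cA w (S h)) (cB w (S h)) * Wf q
        + (b (cA w (S h)) (cB w (S h)) * (cB w (S h))⁻¹) * (m q * h q - cA w (S h) * Wf q) + Gf q)
        + σ * h q = 0 := by
  set c₁ := cA w (S h)
  set c₂ := cB w (S h)
  have e0 : pA a b w (S h) = a c₁ c₂ • w + (b c₁ c₂ * c₂⁻¹) • (S h - c₁ • w) := rfl
  have e1 : (S (pA a b w (S h) + Γ) + σ • h : Lp ℝ 2 P) =ᵐ[P] fun q =>
      m q * (a c₁ c₂ * Wf q + (b c₁ c₂ * c₂⁻¹) * (m q * h q - c₁ * Wf q) + Gf q) + σ * h q := by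
    rw [e0]
    filter_upwards [hw, hΓ, hS h,
      Lp.coeFn_add (S (a c₁ c₂ • w + (b c₁ c₂ * c₂⁻¹) • (S h - c₁ • w) + Γ)) (σ • h),
      hS (a c₁ c₂ • w + (b c₁ c₂ * c₂⁻¹) • (S h - c₁ • w) + Γ),
      Lp.coeFn_add (a c₁ c₂ • w + (b c₁ c₂ * c₂⁻¹) • (S h - c₁ • w)) Γ,
      Lp.coeFn_add (a c₁ c₂ • w) ((b c₁ c₂ * c₂⁻¹) • (S h - c₁ • w)),
      Lp.coeFn_smul (a c₁ c₂) w, Lp.coeFn_smul (b c₁ c₂ * c₂⁻¹) (S h - c₁ • w),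
      Lp.coeFn_sub (S h) (c₁ • w), Lp.coeFn_smul c₁ w, Lp.coeFn_smul σ h] with q
      h1 h2 h3 h4 h5 h6 h7 h8 h9 h10 h11 h12
    simp only [h4, h5, h6, h7, h8, h9, h10, h11, h12, Pi.add_apply, Pi.smul_apply, Pi.sub_apply,
      smul_eq_mul, h1, h2, h3]
  rw [Lp.eq_zero_iff_ae_eq_zero]
  constructor
  · intro h0
    filter_upwards [e1, h0] with q h1 h2
    rw [← h1, h2]; rfl
  · intro h0
    filter_upwards [e1, h0] with q h1 h2
    rw [h1, h2]; rfl

end conc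

/-! ### Bridge between the system and the stationarity condition -/

section bridge

lemma measurable_Xc : Measurable Xc := by unfold Xc; fun_prop
lemma measurable_Wc : Measurable Wc := by unfold Wc; fun_prop
lemma measurable_Gc : Measurable Gc := by unfold Gc; fun_prop

lemma solSys_iff (f : ℝ → ℝ) (P : Measure Pt)
    (xmin xmax : ℝ) (hxmin : 0 < xmin) (hX : ∀ᵐ q ∂P, Xc q ∈ Set.Icc xmin xmax)
    (ψ κ c₁ c₂ s : ℝ) (w h : Lp ℝ 2 P) (S : Lp ℝ 2 P →L[ℝ] Lp ℝ 2 P) (hw : w =ᵐ[P] Wc)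
    (hS : ∀ h : Lp ℝ 2 P, S h =ᵐ[P] fun q => √(Xc q) * h q)
    (hh : h =ᵐ[P] fun q => -((√ψ * projW P Gc q
        + (d1F f κ c₁ c₂ - c₁ * (d2F f κ c₁ c₂ * c₂⁻¹)) * Wc q) /
          ((d2F f κ c₁ c₂ * c₂⁻¹) * √(Xc q) + √ψ * s * (√(Xc q))⁻¹))) :
    SolSys f P ψ κ c₁ c₂ s ↔ (cA w (S h) = c₁ ∧ ‖S h‖ ^ 2 = c₁ ^ 2 + c₂ ^ 2 ∧ ‖h‖ ^ 2 = 1) := by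
  have e1 : cA w (S h) = ∫ q, (√(Xc q) * h q) * Wc q ∂P :=
    inner_toLp' P _ _ _ _ (hS h) hw
  have e2 := norm_sq_toLp' P _ _ (hS h)
  have e3 := norm_sq_toLp' P _ h ae_eq_rfl
  have i1 : (∫ q, (√ψ * projW P Gc q
        + (d1F f κ c₁ c₂ - c₁ * c₂⁻¹ * d2F f κ c₁ c₂) * Wc q) * Wc q * √(Xc q)
      / (c₂⁻¹ * d2F f κ c₁ c₂ * √(Xc q) + √ψ * s * (√(Xc q))⁻¹) ∂P) = - cA w (S h) := by
    rw [e1, ← integral_neg]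
    apply integral_congr_ae
    filter_upwards [hh] with q hq
    rw [hq, mul_comm (d2F f κ c₁ c₂) c₂⁻¹]; ring
  have i2 : (∫ q, (√ψ * projW P Gc q
        + (d1F f κ c₁ c₂ - c₁ * c₂⁻¹ * d2F f κ c₁ c₂) * Wc q) ^ 2 * Xc q
      / (c₂⁻¹ * d2F f κ c₁ c₂ * √(Xc q) + √ψ * s * (√(Xc q))⁻¹) ^ 2 ∂P) = ‖S h‖ ^ 2 := by
    rw [e2]
    apply integral_congr_ae
    filter_upwards [hh, hX] with q hq hx
    have : √(Xc q) ^ 2 = Xc q := Real.sq_sqrt (hxmin.le.trans hx.1)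
    simp only [mul_pow, this]
    rw [hq, mul_comm (d2F f κ c₁ c₂) c₂⁻¹, neg_sq, div_pow]; ring
  have i3 : (∫ q, (√ψ * projW P Gc q
        + (d1F f κ c₁ c₂ - c₁ * c₂⁻¹ * d2F f κ c₁ c₂) * Wc q) ^ 2
      / (c₂⁻¹ * d2F f κ c₁ c₂ * √(Xc q) + √ψ * s * (√(Xc q))⁻¹) ^ 2 ∂P) = ‖h‖ ^ 2 := by
    rw [e3]
    apply integral_congr_ae
    filter_upwards [hh] with q hq
    rw [hq, mul_comm (d2F f κ c₁ c₂) c₂⁻¹, neg_sq, div_pow]; ring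
  unfold SolSys
  rw [i1, i2, i3]
  constructor
  · rintro ⟨h1, h2, h3⟩; exact ⟨by linarith, h2.symm, h3.symm⟩
  · rintro ⟨h1, h2, h3⟩; exact ⟨by linarith, h2.symm, h3.symm⟩

lemma bridge_mp (f : ℝ → ℝ) (P : Measure Pt)
    (xmin xmax : ℝ) (hxmin : 0 < xmin) (hX : ∀ᵐ q ∂P, Xc q ∈ Set.Icc xmin xmax)
    (ψ κ c₁ c₂ s : ℝ) (hψ : 0 < ψ) (hs : 0 < s) (hc₂ : 0 < c₂) (hd : 0 ≤ d2F f κ c₁ c₂)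
    (w Γ : Lp ℝ 2 P) (S : Lp ℝ 2 P →L[ℝ] Lp ℝ 2 P) (hw : w =ᵐ[P] Wc)
    (hw1 : ‖w‖ = 1) (hΓ : Γ =ᵐ[P] fun q => √ψ * projW P Gc q)
    (hS : ∀ h : Lp ℝ 2 P, S h =ᵐ[P] fun q => √(Xc q) * h q)
    (hsol : SolSys f P ψ κ c₁ c₂ s) :
    ∃ h : Lp ℝ 2 P, ‖h‖ = 1 ∧ cA w (S h) = c₁ ∧ cB w (S h) = c₂ ∧
      S (pA (d1F f κ) (d2F f κ) w (S h) + Γ) + (√ψ * s) • h = 0 := by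
  set β := d2F f κ c₁ c₂ * c₂⁻¹ with hβ
  have hβ0 : 0 ≤ β := by positivity
  have hσ : 0 < √ψ * s := by positivity
  obtain ⟨T, hT⟩ := mulOp P (fun q => (β * √(Xc q) + √ψ * s * (√(Xc q))⁻¹)⁻¹)
    (by have := measurable_Xc; fun_prop) (√xmax / (√ψ * s)) (by
      filter_upwards [hX] with q hq
      have h1 : 0 < Xc q := hxmin.trans_le hq.1
      have h2 : 0 < √(Xc q) := Real.sqrt_pos.mpr h1
      have h3 : √(Xc q) ≤ √xmax := Real.sqrt_le_sqrt hq.2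
      rw [norm_inv, Real.norm_of_nonneg (by positivity)]
      calc (β * √(Xc q) + √ψ * s * (√(Xc q))⁻¹)⁻¹ ≤ (√ψ * s * (√(Xc q))⁻¹)⁻¹ := by
            apply inv_anti₀ (by positivity)
            have : 0 ≤ β * √(Xc q) := by positivity
            linarith
        _ = √(Xc q) / (√ψ * s) := by field_simp
        _ ≤ _ := by gcongr)
  set A := d1F f κ c₁ c₂ - c₁ * β with hA
  set h : Lp ℝ 2 P := -(T (Γ + A • w)) with hh
  have hhe : h =ᵐ[P] fun q => -((√ψ * projW P Gc q + A * Wc q) /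
          (β * √(Xc q) + √ψ * s * (√(Xc q))⁻¹)) := by
    filter_upwards [Lp.coeFn_neg (T (Γ + A • w)), hT (Γ + A • w), Lp.coeFn_add Γ (A • w),
      Lp.coeFn_smul A w, hw, hΓ] with q h1 h2 h3 h4 h5 h6
    rw [hh, h1, Pi.neg_apply, h2, h3, Pi.add_apply, h4, Pi.smul_apply, h5, h6, smul_eq_mul,
      div_eq_mul_inv, mul_comm (_⁻¹)]
  obtain ⟨s1, s2, s3⟩ := (solSys_iff f P xmin xmax hxmin hX ψ κ c₁ c₂ s w h S hw hS hhe).mp hsol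
  have s4 : cB w (S h) = c₂ := by
    have := norm_sq_split w (S h) hw1
    rw [s2, s1] at this
    have h5 : cB w (S h) ^ 2 = c₂ ^ 2 := by linarith
    exact (sq_eq_sq₀ (norm_nonneg _) hc₂.le).mp h5
  refine ⟨h, ?_, s1, s4, ?_⟩
  · exact (sq_eq_sq₀ (norm_nonneg _) zero_le_one).mp (by rw [s3]; norm_num)
  · rw [pA_coe P _ _ w Γ h S Wc _ _ hw hΓ hS, s1, s4]
    filter_upwards [hhe, hX] with q h1 h2
    exact (kkt_pt _ _ _ _ _ _ _ _ (Real.sqrt_pos.mpr (hxmin.trans_le h2.1)) hσ hβ0).mpr h1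

lemma bridge_mpr (f : ℝ → ℝ) (P : Measure Pt)
    (xmin xmax : ℝ) (hxmin : 0 < xmin) (hX : ∀ᵐ q ∂P, Xc q ∈ Set.Icc xmin xmax)
    (ψ κ c₁ c₂ s : ℝ) (hψ : 0 < ψ) (hs : 0 < s) (hc₂ : 0 < c₂) (hd : 0 ≤ d2F f κ c₁ c₂)
    (w Γ : Lp ℝ 2 P) (S : Lp ℝ 2 P →L[ℝ] Lp ℝ 2 P) (hw : w =ᵐ[P] Wc)
    (hw1 : ‖w‖ = 1) (hΓ : Γ =ᵐ[P] fun q => √ψ * projW P Gc q)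
    (hS : ∀ h : Lp ℝ 2 P, S h =ᵐ[P] fun q => √(Xc q) * h q)
    (h : Lp ℝ 2 P) (hn : ‖h‖ = 1) (s1 : cA w (S h) = c₁) (s4 : cB w (S h) = c₂)
    (hk : S (pA (d1F f κ) (d2F f κ) w (S h) + Γ) + (√ψ * s) • h = 0) :
    SolSys f P ψ κ c₁ c₂ s := by
  have hβ0 : 0 ≤ d2F f κ c₁ c₂ * c₂⁻¹ := by positivity
  have hσ : 0 < √ψ * s := by positivity
  rw [pA_coe P _ _ w Γ h S Wc _ _ hw hΓ hS, s1, s4] at hk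
  refine (solSys_iff f P xmin xmax hxmin hX ψ κ c₁ c₂ s w h S hw hS ?_).mpr ⟨s1, ?_, ?_⟩
  · filter_upwards [hk, hX] with q h1 h2
    exact (kkt_pt _ _ _ _ _ _ _ _ (Real.sqrt_pos.mpr (hxmin.trans_le h2.1)) hσ hβ0).mp h1
  · rw [norm_sq_split w (S h) hw1, s1, s4]
  · rw [hn]; norm_num

/-- The orthogonal component does not vanish. -/
lemma cB_pos (f : ℝ → ℝ) (hf : Continuous f) (hf01 : ∀ x, f x ∈ Set.Icc (0:ℝ) 1)
    (P : Measure Pt)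
    (xmin xmax : ℝ) (hxmin : 0 < xmin) (hX : ∀ᵐ q ∂P, Xc q ∈ Set.Icc xmin xmax)
    (ψ κ σ : ℝ) (hκ : 0 < κ) (hσ : 0 < σ)
    (hB2 : CondB2 f P ψ κ) (hB3 : CondB3 f P ψ κ)
    (w Γ : Lp ℝ 2 P) (S : Lp ℝ 2 P →L[ℝ] Lp ℝ 2 P) (hw : w =ᵐ[P] Wc)
    (hw1 : ‖w‖ = 1) (hΓ : Γ =ᵐ[P] fun q => √ψ * projW P Gc q) (hΓw : inner ℝ Γ w = 0)
    (hS : ∀ h : Lp ℝ 2 P, S h =ᵐ[P] fun q => √(Xc q) * h q)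
    (h : Lp ℝ 2 P) (hn : ‖h‖ = 1)
    (hk : S (pA (d1F f κ) (d2F f κ) w (S h) + Γ) + σ • h = 0) :
    0 < cB w (S h) := by
  by_contra hneg
  have hB : cB w (S h) = 0 := le_antisymm (not_lt.mp hneg) (norm_nonneg _)
  set c := cA w (S h) with hc
  have hSh : S h = c • w := by
    have : oA w (S h) = 0 := norm_eq_zero.mp hB
    exact sub_eq_zero.mp this
  rw [pA_coe P _ _ w Γ h S Wc _ _ hw hΓ hS, hB, ← hc, inv_zero] at hk
  set a := d1F f κ c 0 with ha
  have hhe : h =ᵐ[P] fun q => c * ((√(Xc q))⁻¹ * Wc q) := by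
    have h0 : (S h : Pt → ℝ) =ᵐ[P] fun q => c * Wc q := by
      rw [hSh]
      filter_upwards [Lp.coeFn_smul c w, hw] with q h1 h2
      rw [h1, Pi.smul_apply, h2, smul_eq_mul]
    filter_upwards [h0, hS h, hX] with q h1 h2 h3
    have h4 : 0 < √(Xc q) := Real.sqrt_pos.mpr (hxmin.trans_le h3.1)
    rw [h2] at h1
    field_simp
    linarith
  have hE : ∃ E, E = ∫ q, ((√(Xc q))⁻¹ * Wc q) * ((√(Xc q))⁻¹ * Wc q) ∂P := ⟨_, rfl⟩
  obtain ⟨E, hE⟩ := hE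
  have hcE : c ^ 2 * E = 1 := by
    have := norm_sq_toLp' P _ h hhe
    rw [hn, one_pow] at this
    rw [this, hE, ← integral_const_mul]
    congr 1; funext q; ring
  have hE0 : 0 < E := by
    by_contra h0
    have : c ^ 2 * E ≤ 0 := mul_nonpos_of_nonneg_of_nonpos (sq_nonneg c) (not_lt.mp h0)
    linarith
  have hz : zetaP P = (√E)⁻¹ := by unfold zetaP pnorm ip; rw [hE]
  have hz0 : 0 < zetaP P := by rw [hz]; positivity
  have hz2 : zetaP P ^ 2 = E⁻¹ := by rw [hz, inv_pow, Real.sq_sqrt hE0.le]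
  have hc2 : c ^ 2 = zetaP P ^ 2 := by rw [hz2]; field_simp; linarith
  have hΓe : Γ =ᵐ[P] fun q => -(a * Wc q + σ * c * ((√(Xc q))⁻¹ * ((√(Xc q))⁻¹ * Wc q))) := by
    filter_upwards [hk, hhe, hΓ, hX] with q h1 h2 h3 h5
    have h4 : 0 < √(Xc q) := Real.sqrt_pos.mpr (hxmin.trans_le h5.1)
    rw [h2] at h1
    rw [h3]
    have : √(Xc q) * (√ψ * projW P Gc q
      + (a * Wc q + σ * c * ((√(Xc q))⁻¹ * ((√(Xc q))⁻¹ * Wc q)))) = 0 := by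
      rw [← h1]; field_simp; ring
    have := (mul_eq_zero.mp this).resolve_left h4.ne'
    linarith
  have hrel : a + σ * c * E = 0 := by
    have hL : ((Γ + a • w : Lp ℝ 2 P) : Pt → ℝ) =ᵐ[P]
        fun q => -(σ * c * ((√(Xc q))⁻¹ * ((√(Xc q))⁻¹ * Wc q))) := by
      filter_upwards [Lp.coeFn_add Γ (a • w), Lp.coeFn_smul a w, hΓe, hw] with q h1 h2 h3 h4
      rw [h1, Pi.add_apply, h2, h3, Pi.smul_apply, h4, smul_eq_mul]; ring
    have h1 := inner_toLp' P _ _ _ _ hL hw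
    rw [inner_add_left, hΓw, inner_smul_left, real_inner_self_eq_norm_sq, hw1] at h1
    have h2 : (∫ q, -(σ * c * ((√(Xc q))⁻¹ * ((√(Xc q))⁻¹ * Wc q))) * Wc q ∂P)
        = -(σ * c) * E := by
      rw [hE, ← integral_const_mul]; congr 1; funext q; ring
    rw [h2] at h1
    simp at h1
    linarith
  have hσc : σ * c = -(a * zetaP P ^ 2) := by rw [hz2]; field_simp; linarith
  have hpn : pnorm P (fun q => a * (1 - (zetaP P) ^ 2 * (Xc q)⁻¹) * Wc q
        + √ψ * projW P Gc q) = 0 := by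
    unfold pnorm ip
    rw [Real.sqrt_eq_zero']
    apply le_of_eq
    apply integral_eq_zero_of_ae
    filter_upwards [hΓe, hΓ, hX] with q h1 h2 h3
    rw [h2, hσc] at h1
    have h5 : (√(Xc q))⁻¹ * (√(Xc q))⁻¹ = (Xc q)⁻¹ := by
      rw [← mul_inv, Real.mul_self_sqrt (hxmin.le.trans h3.1)]
    rw [h1, ← mul_assoc (√(Xc q))⁻¹, h5, Pi.zero_apply]
    ring
  rcases sq_eq_sq_iff_eq_or_eq_neg.mp hc2 with h1 | h1
  · unfold CondB2 at hB2
    rw [← h1, d2F_zero f hf hf01 κ hκ, ← ha, h1, hpn] at hB2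
    rcases hB2 with h2 | h2
    · have h3 : 0 < c := h1 ▸ hz0
      have : 0 < σ * c * E := by positivity
      linarith
    · exact lt_irrefl _ h2
  · unfold CondB3 at hB3
    rw [← h1, d2F_zero f hf hf01 κ hκ, ← ha, hpn] at hB3
    rcases hB3 with h2 | h2
    · have h3 : 0 < -c := by rw [h1, neg_neg]; exact hz0
      have : 0 < σ * (-c) * E := by positivity
      linarith
    · exact lt_irrefl _ h2

/-- Unboundedness from (B1). -/
lemma unb (f : ℝ → ℝ) (hf : Continuous f) (hf01 : ∀ x, f x ∈ Set.Icc (0:ℝ) 1) (κ : ℝ)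
    (hκ : 0 < κ) {H : Type*} [NormedAddCommGroup H] [InnerProductSpace ℝ H] (w Γ : H)
    (hw1 : ‖w‖ = 1) (hΓw : inner ℝ Γ w = 0) (S : H →L[ℝ] H) (hsurj : ∀ v, ∃ y, S y = v)
    (hB : √(psiStar0 f) < ‖Γ‖) (L : ℝ) :
    ∃ y, NN (Fk f κ) w (S y) + inner ℝ (S y) Γ < L := by
  have hΓ0 : 0 < ‖Γ‖ := (Real.sqrt_nonneg _).trans_lt hB
  have h1 : psiStar0 f < ‖Γ‖ ^ 2 := (Real.sqrt_lt' hΓ0).mp hB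
  obtain ⟨c, hc⟩ := exists_lt_of_ciInf_lt h1
  have hF0 : Fk f 0 c 1 < ‖Γ‖ := lt_of_pow_lt_pow_left₀ 2 hΓ0.le hc
  have hd : 0 < ‖Γ‖ - Fk f 0 c 1 := by linarith
  set t := (|κ - L| + 1) / (‖Γ‖ - Fk f 0 c 1) with ht
  have ht0 : 0 ≤ t := by positivity
  have htd : t * (‖Γ‖ - Fk f 0 c 1) = |κ - L| + 1 := by rw [ht]; field_simp
  obtain ⟨y, hy⟩ := hsurj ((t * c) • w - (t * ‖Γ‖⁻¹) • Γ)
  refine ⟨y, ?_⟩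
  have hwΓ : inner ℝ w Γ = 0 := by rw [real_inner_comm]; exact hΓw
  have e1 : cA w (S y) = t * c := by
    rw [hy]; unfold cA
    rw [inner_sub_left, inner_smul_left, inner_smul_left, hΓw, real_inner_self_eq_norm_sq, hw1]
    simp
  have e2 : cB w (S y) = t := by
    unfold cB oA
    rw [e1, hy, sub_sub_cancel_left, norm_neg, norm_smul, norm_mul, norm_inv, norm_norm,
      mul_assoc, inv_mul_cancel₀ hΓ0.ne', mul_one, Real.norm_of_nonneg ht0]
  have e3 : inner ℝ (S y) Γ = -(t * ‖Γ‖) := by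
    rw [hy, inner_sub_left, inner_smul_left, inner_smul_left, hwΓ, real_inner_self_eq_norm_sq]
    simp; field_simp
  unfold NN
  rw [e1, e2, e3]
  have := Fk_growth f hf hf01 κ c t hκ ht0
  have := le_abs_self (κ - L)
  nlinarith

end bridge

/-- Under (B1), (B2), (B3), the system of equations admits a unique solution
`(c₁,c₂,s) ∈ ℝ × (0,∞) × (0,∞)`. -/
theorem statement_4 (f : ℝ → ℝ) (hf : Continuous f) (hf01 : ∀ x, f x ∈ Set.Icc (0:ℝ) 1)
    (hnd : NonDeg f)
    (P : Measure Pt) [IsProbabilityMeasure P]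
    (xmin xmax : ℝ) (hxmin : 0 < xmin) (hxx : xmin ≤ xmax)
    (hG2 : Integrable (fun q => (Gc q) ^ 2) P)
    (hW2 : ∫ q, (Wc q) ^ 2 ∂P = 1)
    (hX : ∀ᵐ q ∂P, Xc q ∈ Set.Icc xmin xmax)
    (ψ κ : ℝ) (hψ : 0 < ψ) (hκ : 0 < κ)
    (hB1 : CondB1 f P ψ) (hB2 : CondB2 f P ψ κ) (hB3 : CondB3 f P ψ κ) :
    ∃! t : ℝ × ℝ × ℝ, 0 < t.2.1 ∧ 0 < t.2.2 ∧ SolSys f P ψ κ t.1 t.2.1 t.2.2 := by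
  have hψ' : 0 < √ψ := Real.sqrt_pos.mpr hψ
  have hWi : Integrable (fun q => (Wc q) ^ 2) P := by
    by_contra h
    rw [integral_undef h] at hW2
    norm_num at hW2
  have hWm : MemLp Wc 2 P :=
    (memLp_two_iff_integrable_sq measurable_Wc.aestronglyMeasurable).mpr hWi
  have hGm : MemLp Gc 2 P :=
    (memLp_two_iff_integrable_sq measurable_Gc.aestronglyMeasurable).mpr hG2
  have hPm : MemLp (projW P Gc) 2 P := hGm.sub (hWm.const_mul (ip P Gc Wc))
  have hΓm : MemLp (fun q => √ψ * projW P Gc q) 2 P := hPm.const_mul _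
  have hw := hWm.coeFn_toLp
  have hΓ := hΓm.coeFn_toLp
  set w : Lp ℝ 2 P := hWm.toLp Wc
  set Γ : Lp ℝ 2 P := hΓm.toLp _
  have hw1 : ‖w‖ = 1 := by
    have := norm_sq_toLp' P _ w hw
    rw [hW2] at this
    exact (sq_eq_sq₀ (norm_nonneg _) zero_le_one).mp (by rw [this]; norm_num)
  have hΓe : Γ = √ψ • (hGm.toLp Gc - ip P Gc Wc • w) := by
    apply Lp.ext
    filter_upwards [hΓ, hw, hGm.coeFn_toLp, Lp.coeFn_smul (√ψ) (hGm.toLp Gc - ip P Gc Wc • w),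
      Lp.coeFn_sub (hGm.toLp Gc) (ip P Gc Wc • w), Lp.coeFn_smul (ip P Gc Wc) w] with q
      h1 h2 h3 h4 h5 h6
    rw [h1, h4, Pi.smul_apply, h5, Pi.sub_apply, h6, Pi.smul_apply, h3, h2]
    rfl
  have hΓw : inner ℝ Γ w = 0 := by
    rw [hΓe, inner_smul_left, inner_sub_left, inner_smul_left, real_inner_self_eq_norm_sq, hw1,
      inner_toLp' P _ _ _ _ hGm.coeFn_toLp hw]
    simp [ip]
  have hΓn : ‖Γ‖ = √ψ * pnorm P (projW P Gc) := by
    have h1 := norm_sq_toLp' P _ Γ hΓ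
    have h2 : ‖Γ‖ ^ 2 = ψ * ip P (projW P Gc) (projW P Gc) := by
      rw [h1, ip, ← integral_const_mul]
      congr 1; funext q
      rw [mul_pow, Real.sq_sqrt hψ.le]; ring
    rw [← Real.sqrt_sq (norm_nonneg Γ), h2, Real.sqrt_mul hψ.le]; rfl
  have hXm := measurable_Xc
  obtain ⟨S, hS⟩ := mulOp P (fun q => √(Xc q)) (by fun_prop) (√xmax) (by
    filter_upwards [hX] with q hq
    rw [Real.norm_of_nonneg (Real.sqrt_nonneg _)]
    exact Real.sqrt_le_sqrt hq.2)
  obtain ⟨R, hR⟩ := mulOp P (fun q => (√(Xc q))⁻¹) (by fun_prop) ((√xmin)⁻¹) (by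
    filter_upwards [hX] with q hq
    rw [Real.norm_of_nonneg (inv_nonneg.mpr (Real.sqrt_nonneg _))]
    exact inv_anti₀ (Real.sqrt_pos.mpr hxmin) (Real.sqrt_le_sqrt hq.1))
  have hsurj : ∀ v, ∃ y, S y = v := by
    intro v
    refine ⟨R v, Lp.ext ?_⟩
    filter_upwards [hS (R v), hR v, hX] with q h1 h2 h3
    have h4 : 0 < √(Xc q) := Real.sqrt_pos.mpr (hxmin.trans_le h3.1)
    rw [h1, h2]; field_simp
  have hSs := mulOp_symm P _ S hS
  have hF : FH (Fk f κ) (d1F f κ) (d2F f κ) :=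
    { bounds := fun c₁ c₂ => Fk_bounds f hf hf01 κ hκ c₁ c₂
      bnn := fun c₁ c₂ hc => d2F_nonneg f hf hf01 κ hκ c₁ c₂ hc
      bz := fun c₁ => d2F_zero f hf hf01 κ hκ c₁
      nn := fun c₁ c₂ => (Fk_pos f hf hf01 κ c₁ c₂ hκ).le }
  have hB1' : √(psiStar0 f) < ‖Γ‖ := by rw [hΓn]; exact hB1
  obtain ⟨σ, h, hσ, hn, hk⟩ := kkt_exists (Fk f κ) (d1F f κ) (d2F f κ) hF w Γ hw1 S hSs
    (unb f hf hf01 κ hκ w Γ hw1 hΓw S hsurj hB1')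
  have hBp := cB_pos f hf hf01 P xmin xmax hxmin hX ψ κ σ hκ hσ hB2 hB3 w Γ S hw hw1 hΓ hΓw hS
    h hn hk
  have hσe : √ψ * (σ / √ψ) = σ := by field_simp
  refine ⟨(cA w (S h), cB w (S h), σ / √ψ), ⟨hBp, by positivity, ?_⟩, ?_⟩
  · exact bridge_mpr f P xmin xmax hxmin hX ψ κ _ _ _ hψ (by positivity) hBp
      (d2F_nonneg f hf hf01 κ hκ _ _ hBp.le) w Γ S hw hw1 hΓ hS h hn rfl rfl (by rw [hσe]; exact hk)
  · rintro ⟨c₁, c₂, s⟩ ⟨hc₂, hs, hsol⟩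
    simp only at hc₂ hs hsol
    obtain ⟨h', hn', e1, e2, hk'⟩ := bridge_mp f P xmin xmax hxmin hX ψ κ c₁ c₂ s hψ hs hc₂
      (d2F_nonneg f hf hf01 κ hκ _ _ hc₂.le) w Γ S hw hw1 hΓ hS hsol
    obtain ⟨e3, e4⟩ := kkt_unique (Fk f κ) (d1F f κ) (d2F f κ) hF w Γ hw1 S hSs _ _
      (by positivity) hσ h' h hn' hn hk' hk
    rw [← e1, ← e2, e3, ← e4]
    congr 2
    field_simp

end MaxMargin
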